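/- Let n ≥ 1 be an integer, ξ ∈ F_q((T^{-1})), and let k ≥ 0 be the integer with p^k ≤ n < p^{k+1}. Then w_n(ξ)/p^k − n + 2/p^k − 1 ≤ w_n*(ξ) ≤ w_n(ξ). Furthermore, if 1 ≤ n < 2p, then w_n(ξ) − n + 1 ≤ w_n*(ξ) ≤ w_n(ξ). (In particular, taking n = 2, one gets 0 ≤ w_2(ξ) − w_2*(ξ) ≤ 1 whenever these quantities are finite.) -/

import Mathlib

open Polynomial Filter
open scoped ENNReal

noncomputable section

namespace Ooto

variable (Fq : Type) [Field Fq] [Fintype Fq]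

/-- `F_q((T⁻¹))`, realized as formal Laurent series in the variable `X = T⁻¹`. -/
abbrev K := LaurentSeries Fq

/-- The element `T = X⁻¹` of `F_q((T⁻¹))`. -/
def TT : K Fq := HahnSeries.single (-1 : ℤ) (1 : Fq)

/-- The natural embedding of `F_q[T]` into `F_q((T⁻¹))`, sending `T` to `T`. -/
def polyToK : Polynomial Fq →+* K Fq := Polynomial.eval₂RingHom HahnSeries.C (TT Fq)

open Classical in
/-- The absolute value on `F_q((T⁻¹))`: `|0| = 0` and `|ξ| = q^{-N}` where `N` is the order
of `ξ` as a series in `T⁻¹`. -/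
def kabs (f : K Fq) : ℝ := if f = 0 then 0 else (Fintype.card Fq : ℝ) ^ (-f.order)

/-- A fixed algebraic closure of `F_q((T⁻¹))`. -/
abbrev L := AlgebraicClosure (K Fq)

def toL : K Fq →+* L Fq := algebraMap (K Fq) (L Fq)

def φ : Polynomial Fq →+* L Fq := (toL Fq).comp (polyToK Fq)

/-- Evaluation of `P ∈ (F_q[T])[X]` at `ξ ∈ F_q((T⁻¹))`. -/
def evalK (P : Polynomial (Polynomial Fq)) (ξ : K Fq) : K Fq :=
  Polynomial.eval₂ (polyToK Fq) ξ P

/-- Evaluation of `P ∈ (F_q[T])[X]` at a point of the algebraic closure. -/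
def evalL (P : Polynomial (Polynomial Fq)) (α : L Fq) : L Fq :=
  Polynomial.eval₂ (φ Fq) α P

/-- Height of a polynomial over `F_q[T]`: the maximum of the absolute values of its
coefficients. -/
def Hpoly (P : Polynomial (Polynomial Fq)) : ℝ := ⨆ i : ℕ, kabs Fq (polyToK Fq (P.coeff i))

/-- `P` is the minimal polynomial of `α`: a non-constant irreducible primitive polynomial in
`(F_q[T])[X]` whose leading coefficient is monic in `T`, vanishing at `α`. -/
def IsMinPolyOf (P : Polynomial (Polynomial Fq)) (α : L Fq) : Prop :=
  0 < P.natDegree ∧ Irreducible P ∧ P.IsPrimitive ∧ (P.leadingCoeff).Monic ∧ evalL Fq P α = 0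

/-- `α` is algebraic over `F_q(T)`. -/
def IsAlgElem (α : L Fq) : Prop := ∃ P, IsMinPolyOf Fq P α

open Classical in
/-- The minimal polynomial of an algebraic element (junk value `0` otherwise). -/
def minPolyPrim (α : L Fq) : Polynomial (Polynomial Fq) :=
  if h : IsAlgElem Fq α then h.choose else 0

/-- Degree of an algebraic element. -/
def degAlg (α : L Fq) : ℕ := (minPolyPrim Fq α).natDegree

/-- Height of an algebraic element. -/
def heightAlg (α : L Fq) : ℝ := Hpoly Fq (minPolyPrim Fq α)

/-- Inseparable degree of a polynomial `P ∈ (F_q[T])[X]`: the largest power `f = p^j` of the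
characteristic such that `P(X) = R(X^f)` for some `R`. -/
def insepDeg (P : Polynomial (Polynomial Fq)) : ℕ :=
  (ringChar Fq) ^ sSup {j : ℕ | ∃ R : Polynomial (Polynomial Fq),
    P = R.comp (Polynomial.X ^ (ringChar Fq) ^ j)}

/-- Inseparable degree of an algebraic element. -/
def insepAlg (α : L Fq) : ℕ := insepDeg Fq (minPolyPrim Fq α)

/-- `α'` is the Galois conjugate of the quadratic element `α` (equal to `α` itself in the
inseparable case): the minimal polynomial of `α` factors as `A(X - α)(X - α')`. -/
def IsConjOf (α' α : L Fq) : Prop :=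
  (minPolyPrim Fq α).natDegree = 2 ∧
  (minPolyPrim Fq α).map (φ Fq) =
    Polynomial.C (φ Fq (minPolyPrim Fq α).leadingCoeff) *
      (Polynomial.X - Polynomial.C α) * (Polynomial.X - Polynomial.C α')

/-- `v` is an absolute value on the algebraic closure of `F_q((T⁻¹))` extending `kabs`
(such an extension exists and is unique). -/
structure IsAbsExt (v : L Fq → ℝ) : Prop where
  eq_zero_iff : ∀ x, v x = 0 ↔ x = 0
  map_mul : ∀ x y, v (x * y) = v x * v y
  add_le : ∀ x y, v (x + y) ≤ max (v x) (v y)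
  nonneg : ∀ x, 0 ≤ v x
  extends_kabs : ∀ f : K Fq, v (toL Fq f) = kabs Fq f

/-- The exponent `w_n(ξ)`: the supremum of the real numbers `w` such that
`0 < |P(ξ)| ≤ H(P)^{-w}` for infinitely many `P ∈ (F_q[T])[X]` of degree at most `n`. -/
def wExp (n : ℕ) (ξ : K Fq) : EReal :=
  sSup {x : EReal | ∃ w : ℝ, x = (w : EReal) ∧
    {P : Polynomial (Polynomial Fq) | P.natDegree ≤ n ∧ 0 < kabs Fq (evalK Fq P ξ) ∧
      kabs Fq (evalK Fq P ξ) ≤ Hpoly Fq P ^ (-w)}.Infinite}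

/-- The exponent `w_n^*(ξ)`: the supremum of the real numbers `w` such that
`0 < |ξ - α| ≤ H(α)^{-w-1}` for infinitely many algebraic `α` of degree at most `n`. -/
def wStarExp (v : L Fq → ℝ) (n : ℕ) (ξ : K Fq) : EReal :=
  sSup {x : EReal | ∃ w : ℝ, x = (w : EReal) ∧
    {α : L Fq | IsAlgElem Fq α ∧ degAlg Fq α ≤ n ∧ 0 < v (toL Fq ξ - α) ∧
      v (toL Fq ξ - α) ≤ heightAlg Fq α ^ (-w - 1)}.Infinite}

/-- `pSeq a n = p_{n-1}`, the numerators of the convergents of `[a 0; a 1, a 2, …]`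
(with `p_{-1} = 1`). -/
def pSeq (a : ℕ → Polynomial Fq) : ℕ → Polynomial Fq
  | 0 => 1
  | 1 => a 0
  | (n+2) => a (n+1) * pSeq a (n+1) + pSeq a n

/-- `qSeq a n = q_{n-1}`, the denominators of the convergents of `[a 0; a 1, a 2, …]`
(with `q_{-1} = 0`). -/
def qSeq (a : ℕ → Polynomial Fq) : ℕ → Polynomial Fq
  | 0 => 0
  | 1 => 1
  | (n+2) => a (n+1) * qSeq a (n+1) + qSeq a n

/-- `ξ` has continued fraction expansion `[a 0; a 1, a 2, …]`: each partial quotient `a n`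
(`n ≥ 1`) has degree at least one and `|ξ - p_n/q_n| = |q_n|⁻¹|q_{n+1}|⁻¹` for all `n ≥ 0`. -/
def IsCFOf (ξ : K Fq) (a : ℕ → Polynomial Fq) : Prop :=
  (∀ n, 1 ≤ n → 1 ≤ (a n).natDegree) ∧
  ∀ n : ℕ,
    kabs Fq (ξ - polyToK Fq (pSeq Fq a (n+1)) / polyToK Fq (qSeq Fq a (n+1))) =
      (kabs Fq (polyToK Fq (qSeq Fq a (n+1))) * kabs Fq (polyToK Fq (qSeq Fq a (n+2))))⁻¹

/-- The sequence of partial quotients of `[0; b 0, b 1, b 2, …]`. -/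
def cfA (b : ℕ → Polynomial Fq) : ℕ → Polynomial Fq := fun n => if n = 0 then 0 else b (n - 1)

/-- `qden b n` is the denominator `q_n` of the `n`-th convergent of `[0; b 0, b 1, …]`. -/
def qden (b : ℕ → Polynomial Fq) (n : ℕ) : Polynomial Fq := qSeq Fq (cfA Fq b) (n + 1)

/-- `V^w` for a finite word `V` and a real `w ≥ 0`: `⌊w⌋` copies of `V` followed by the prefix
of `V` of length `⌈(w - ⌊w⌋)|V|⌉`. -/
def wordPow {A : Type*} (V : List A) (w : ℝ) : List A :=
  (List.replicate ⌊w⌋₊ V).flatten ++ V.take ⌈(w - ⌊w⌋₊) * V.length⌉₊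

/-- The finite word `l` is a prefix of the infinite word `b`. -/
def IsPrefixOfSeq {A : Type*} (l : List A) (b : ℕ → A) : Prop :=
  ∀ (i : ℕ) (h : i < l.length), l.get ⟨i, h⟩ = b i

/-- Condition `(*)_ρ` for an infinite word. -/
def SatisfiesCond {A : Type*} (b : ℕ → A) (ρ : ℝ) : Prop :=
  ∃ (U V : ℕ → List A) (w : ℕ → ℝ),
    (∀ n, V n ≠ []) ∧ (∀ n, 0 ≤ w n) ∧
    (∀ n, IsPrefixOfSeq (U n ++ wordPow (V n) (w n)) b) ∧
    (∀ n, ρ * (((U n).length + (V n).length : ℕ) : ℝ) ≤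
      (((U n).length + (wordPow (V n) (w n)).length : ℕ) : ℝ)) ∧
    StrictMono fun n => (wordPow (V n) (w n)).length

/-- The Diophantine exponent of an infinite word: the supremum of the `ρ` such that the word
satisfies Condition `(*)_ρ`. -/
def dioExp {A : Type*} (b : ℕ → A) : EReal :=
  sSup {x : EReal | ∃ ρ : ℝ, x = (ρ : EReal) ∧ SatisfiesCond b ρ}

/-- The complexity function: the number of distinct blocks of `n` consecutive letters. -/
def complexity {A : Type*} (b : ℕ → A) (n : ℕ) : ℕ∞ :=
  {w : Fin n → A | ∃ i : ℕ, ∀ k : Fin n, w k = b (i + k)}.encard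

/-- The infinite word `b` is ultimately periodic. -/
def UltimatelyPeriodic {A : Type*} (b : ℕ → A) : Prop :=
  ∃ N T : ℕ, 0 < T ∧ ∀ n, N ≤ n → b (n + T) = b n

section

lemma polyToK_coeff (c : Polynomial Fq) (m : ℤ) :
    (polyToK Fq c).coeff m = if m ≤ 0 then c.coeff (-m).toNat else 0 := by
  induction c using Polynomial.induction_on' with
  | add a b ha hb =>
    rw [map_add, HahnSeries.coeff_add, ha, hb]
    split_ifs <;> simp
  | monomial k u =>
    have h : polyToK Fq (monomial k u) = HahnSeries.single (-(k : ℤ)) u := by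
      simp [polyToK, TT, Polynomial.eval₂_monomial, HahnSeries.single_pow,
        HahnSeries.C_apply, HahnSeries.single_mul_single]
    rw [h, HahnSeries.coeff_single, Polynomial.coeff_monomial]
    by_cases hm : m ≤ 0
    · rw [if_pos hm]
      by_cases h2 : m = -(k : ℤ)
      · rw [if_pos h2, if_pos (by omega)]
      · rw [if_neg h2, if_neg (by omega)]
    · rw [if_neg hm, if_neg (by omega)]

lemma polyToK_injective : Function.Injective (polyToK Fq) := by
  rw [injective_iff_map_eq_zero]
  intro c hc
  ext i
  have := polyToK_coeff Fq c (-(i : ℤ))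
  rw [hc] at this
  simpa using this.symm

lemma order_polyToK {c : Polynomial Fq} (hc : c ≠ 0) :
    (polyToK Fq c).order = -(c.natDegree : ℤ) := by
  have h0 : polyToK Fq c ≠ 0 := fun h => hc (polyToK_injective Fq (by simpa using h))
  apply le_antisymm
  · apply HahnSeries.order_le_of_coeff_ne_zero
    rw [polyToK_coeff]
    simpa using hc
  · by_contra h
    push Not at h
    have h1 := HahnSeries.coeff_order_eq_zero.not.mpr h0
    rw [polyToK_coeff] at h1
    apply h1
    rw [if_pos (by omega)]
    apply Polynomial.coeff_eq_zero_of_natDegree_lt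
    omega

/-- The cardinality of `Fq` as a real number. -/
def qq : ℝ := (Fintype.card Fq : ℝ)

lemma one_lt_qq : 1 < qq Fq := by
  unfold qq
  exact_mod_cast Fintype.one_lt_card

lemma kabs_zero : kabs Fq 0 = 0 := by simp [kabs]

lemma kabs_of_ne {f : K Fq} (hf : f ≠ 0) : kabs Fq f = qq Fq ^ (-f.order) := by
  simp [kabs, hf, qq]

lemma kabs_poly {c : Polynomial Fq} (hc : c ≠ 0) :
    kabs Fq (polyToK Fq c) = qq Fq ^ c.natDegree := by
  have h0 : polyToK Fq c ≠ 0 := fun h => hc (polyToK_injective Fq (by simpa using h))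
  rw [kabs_of_ne Fq h0, order_polyToK Fq hc]
  simp

lemma one_le_kabs_poly {c : Polynomial Fq} (hc : c ≠ 0) : 1 ≤ kabs Fq (polyToK Fq c) := by
  rw [kabs_poly Fq hc]
  exact one_le_pow₀ (one_lt_qq Fq).le

/-- every Laurent series is within distance `< 1` of a polynomial -/
lemma exists_poly_part (f : K Fq) : ∃ a : Polynomial Fq,
    kabs Fq (f - polyToK Fq a) ≤ (qq Fq)⁻¹ := by
  have hcoef : ∃ a : Polynomial Fq, ∀ i : ℕ, a.coeff i = f.coeff (-(i : ℤ)) := by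
    refine ⟨∑ i ∈ Finset.range ((-f.order).toNat + 1), monomial i (f.coeff (-(i : ℤ))), ?_⟩
    intro i
    rw [Polynomial.finset_sum_coeff]
    simp only [Polynomial.coeff_monomial, Finset.sum_ite_eq', Finset.mem_range]
    split_ifs with h
    · rfl
    · symm
      apply HahnSeries.coeff_eq_zero_of_lt_order
      omega
  obtain ⟨a, ha⟩ := hcoef
  refine ⟨a, ?_⟩
  have hq := one_lt_qq Fq
  by_cases h0 : f - polyToK Fq a = 0
  · rw [h0, kabs_zero]; positivity
  rw [kabs_of_ne Fq h0, ← zpow_neg_one]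
  apply zpow_le_zpow_right₀ hq.le
  have h1 : 1 ≤ (f - polyToK Fq a).order := by
    by_contra h
    push Not at h
    have h1 := HahnSeries.coeff_order_eq_zero.not.mpr h0
    apply h1
    rw [HahnSeries.coeff_sub, polyToK_coeff, if_pos (by omega), ha]
    rw [sub_eq_zero]; congr 1; omega
  omega

lemma φ_injective : Function.Injective (φ Fq) :=
  (algebraMap (K Fq) (L Fq)).injective.comp (polyToK_injective Fq)

variable {Fq}

/-- `v` as an `AbsoluteValue`. -/
def absV {v : L Fq → ℝ} (hv : IsAbsExt Fq v) : AbsoluteValue (L Fq) ℝ where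
  toFun := v
  map_mul' := hv.map_mul
  nonneg' := hv.nonneg
  eq_zero' := hv.eq_zero_iff
  add_le' x y := (hv.add_le x y).trans
    (max_le (le_add_of_nonneg_right (hv.nonneg y)) (le_add_of_nonneg_left (hv.nonneg x)))

lemma absV_apply {v : L Fq → ℝ} (hv : IsAbsExt Fq v) (x : L Fq) : absV hv x = v x := rfl

lemma absV_na {v : L Fq → ℝ} (hv : IsAbsExt Fq v) : IsNonarchimedean (absV hv) := hv.add_le

lemma absV_toL {v : L Fq → ℝ} (hv : IsAbsExt Fq v) (f : K Fq) :
    absV hv (toL Fq f) = kabs Fq f := hv.extends_kabs f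

lemma absV_φ {v : L Fq → ℝ} (hv : IsAbsExt Fq v) (c : Polynomial Fq) :
    absV hv (φ Fq c) = kabs Fq (polyToK Fq c) := hv.extends_kabs _

lemma toL_evalK (P : Polynomial (Polynomial Fq)) (ξ : K Fq) :
    toL Fq (evalK Fq P ξ) = (P.map (φ Fq)).eval (toL Fq ξ) := by
  rw [evalK, Polynomial.hom_eval₂, Polynomial.eval_map]
  rfl

lemma kabs_nonneg (f : K Fq) : 0 ≤ kabs Fq f := by
  unfold kabs; split_ifs <;> positivity

lemma Hpoly_bdd (P : Polynomial (Polynomial Fq)) :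
    BddAbove (Set.range fun i : ℕ => kabs Fq (polyToK Fq (P.coeff i))) := by
  have : (Set.range fun i : ℕ => kabs Fq (polyToK Fq (P.coeff i))).Finite := by
    have h : (Set.range fun i : ℕ => P.coeff i).Finite := by
      apply ((P.coeffs.finite_toSet).union (Set.finite_singleton 0)).subset
      rintro _ ⟨i, rfl⟩
      by_cases hi : P.coeff i = 0
      · right; simpa using hi
      · left; exact Polynomial.coeff_mem_coeffs hi
    have := h.image (fun c => kabs Fq (polyToK Fq c))
    rwa [← Set.range_comp] at this
  exact this.bddAbove

lemma coeff_le_Hpoly (P : Polynomial (Polynomial Fq)) (i : ℕ) :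
    kabs Fq (polyToK Fq (P.coeff i)) ≤ Hpoly Fq P :=
  le_ciSup (Hpoly_bdd P) i

lemma Hpoly_le {P : Polynomial (Polynomial Fq)} {B : ℝ}
    (h : ∀ i, kabs Fq (polyToK Fq (P.coeff i)) ≤ B) : Hpoly Fq P ≤ B :=
  ciSup_le h

lemma Hpoly_eq_gauss {v : L Fq → ℝ} (hv : IsAbsExt Fq v) (P : Polynomial (Polynomial Fq)) :
    Hpoly Fq P = (P.map (φ Fq)).gaussNorm (absV hv) 1 := by
  apply le_antisymm
  · apply Hpoly_le
    intro i
    have := (P.map (φ Fq)).le_gaussNorm (absV hv) (c := 1) zero_le_one i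
    simpa [absV_φ] using this
  · obtain ⟨i, hi⟩ := (P.map (φ Fq)).exists_eq_gaussNorm (absV hv) 1
    rw [hi]
    simpa [absV_φ] using coeff_le_Hpoly P i

lemma one_le_Hpoly {P : Polynomial (Polynomial Fq)} (hP : P ≠ 0) : 1 ≤ Hpoly Fq P :=
  (one_le_kabs_poly Fq (Polynomial.leadingCoeff_ne_zero.mpr hP)).trans
    (coeff_le_Hpoly P P.natDegree)

lemma Hpoly_expand (P : Polynomial (Polynomial Fq)) {f : ℕ} (hf : 0 < f) :
    Hpoly Fq (expand _ f P) = Hpoly Fq P := by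
  apply le_antisymm
  · apply Hpoly_le
    intro i
    rw [Polynomial.coeff_expand hf]
    split_ifs
    · exact coeff_le_Hpoly P _
    · rw [map_zero, kabs_zero]
      exact (kabs_nonneg _).trans (coeff_le_Hpoly P 0)
  · apply Hpoly_le
    intro i
    have := coeff_le_Hpoly (expand _ f P) (i * f)
    rwa [Polynomial.coeff_expand_mul hf] at this

lemma Hpoly_mul {v : L Fq → ℝ} (hv : IsAbsExt Fq v) (P Q : Polynomial (Polynomial Fq)) :
    Hpoly Fq (P * Q) = Hpoly Fq P * Hpoly Fq Q := by
  simp only [Hpoly_eq_gauss hv, Polynomial.map_mul]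
  exact gaussNorm_mul (absV_na hv) one_pos _ _

lemma Hpoly_C (c : Polynomial Fq) : Hpoly Fq (C c) = kabs Fq (polyToK Fq c) := by
  apply le_antisymm
  · apply Hpoly_le
    intro i
    rw [Polynomial.coeff_C]
    split_ifs
    · exact le_rfl
    · rw [map_zero, kabs_zero]; exact kabs_nonneg _
  · simpa using coeff_le_Hpoly (C c) 0

lemma kabs_mul {v : L Fq → ℝ} (hv : IsAbsExt Fq v) (x y : K Fq) :
    kabs Fq (x * y) = kabs Fq x * kabs Fq y := by
  rw [← absV_toL hv, ← absV_toL hv, ← absV_toL hv, map_mul, map_mul]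

lemma kabs_pow {v : L Fq → ℝ} (hv : IsAbsExt Fq v) (x : K Fq) (m : ℕ) :
    kabs Fq (x ^ m) = kabs Fq x ^ m := by
  rw [← absV_toL hv, ← absV_toL hv, map_pow, map_pow]

lemma kabs_eq_zero {v : L Fq → ℝ} (hv : IsAbsExt Fq v) {x : K Fq} :
    kabs Fq x = 0 ↔ x = 0 := by
  rw [← absV_toL hv, AbsoluteValue.eq_zero]
  exact map_eq_zero_iff _ (algebraMap (K Fq) (L Fq)).injective

lemma kabs_pos {v : L Fq → ℝ} (hv : IsAbsExt Fq v) {x : K Fq} :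
    0 < kabs Fq x ↔ x ≠ 0 := by
  rw [(kabs_nonneg x).lt_iff_ne', Ne, kabs_eq_zero hv]

lemma kabs_na {v : L Fq → ℝ} (hv : IsAbsExt Fq v) : IsNonarchimedean (kabs Fq) := by
  intro x y
  rw [← absV_toL hv, ← absV_toL hv, ← absV_toL hv, map_add]
  exact absV_na hv _ _

/-- finiteness of the set of polynomials of bounded degree and height -/
lemma finite_coeffs {R : Type*} [Semiring R] {S : Set R} (hS : S.Finite) (n : ℕ) :
    {P : Polynomial R | P.natDegree ≤ n ∧ ∀ i, P.coeff i ∈ S}.Finite := by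
  have h := Set.Finite.pi (t := fun _ : Fin (n + 1) => S) (fun _ => hS)
  refine Set.Finite.of_finite_image (f := fun P : Polynomial R => fun i : Fin (n + 1) => P.coeff i)
    (h.subset ?_) ?_
  · rintro _ ⟨P, hP, rfl⟩ i _
    exact hP.2 i
  · intro P hP Q hQ hPQ
    ext i
    by_cases hi : i < n + 1
    · exact congrFun hPQ ⟨i, hi⟩
    · rw [Polynomial.coeff_eq_zero_of_natDegree_lt (by have := hP.1; omega),
        Polynomial.coeff_eq_zero_of_natDegree_lt (by have := hQ.1; omega)]

lemma finite_poly (B : ℝ) : {c : Polynomial Fq | kabs Fq (polyToK Fq c) ≤ B}.Finite := by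
  obtain ⟨N, hN⟩ := pow_unbounded_of_one_lt B (one_lt_qq Fq)
  apply (finite_coeffs (Set.finite_univ (α := Fq)) N).subset
  intro c hc
  refine ⟨?_, fun i => Set.mem_univ _⟩
  by_cases h0 : c = 0
  · simp [h0]
  · have hc' : kabs Fq (polyToK Fq c) ≤ B := hc
    rw [kabs_poly Fq h0] at hc'
    exact ((pow_lt_pow_iff_right₀ (one_lt_qq Fq)).mp (hc'.trans_lt hN)).le

lemma finite_height (n : ℕ) (B : ℝ) :
    {P : Polynomial (Polynomial Fq) | P.natDegree ≤ n ∧ Hpoly Fq P ≤ B}.Finite := by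
  apply (finite_coeffs (finite_poly (Fq := Fq) B) n).subset
  rintro P ⟨h1, h2⟩
  exact ⟨h1, fun i => (coeff_le_Hpoly P i).trans h2⟩

end

section

variable {Fq}

section generic
variable {E : Type*} [Field E]

lemma na_sub_le {V : AbsoluteValue E ℝ} (hV : IsNonarchimedean V) (x y : E) :
    V (x - y) ≤ max (V x) (V y) := by
  have := hV x (-y)
  rwa [AbsoluteValue.map_neg, ← sub_eq_add_neg] at this

lemma na_sub_le_mul {V : AbsoluteValue E ℝ} (hV : IsNonarchimedean V) (x y : E) :
    V (x - y) ≤ max 1 (V x) * max 1 (V y) := by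
  refine (na_sub_le hV x y).trans (max_le ?_ ?_)
  · calc V x ≤ max 1 (V x) := le_max_right _ _
      _ ≤ _ := le_mul_of_one_le_right (by positivity) (le_max_left _ _)
  · calc V y ≤ max 1 (V y) := le_max_right _ _
      _ ≤ _ := le_mul_of_one_le_left (by positivity) (le_max_left _ _)

lemma prod_pairs_le [DecidableEq E] {V : AbsoluteValue E ℝ} (hV : IsNonarchimedean V)
    (t : Finset E) :
    (∏ i ∈ t, ∏ j ∈ t.erase i, V (i - j)) * (∏ i ∈ t, max 1 (V i)) ^ 2
      ≤ (∏ i ∈ t, max 1 (V i)) ^ (2 * t.card) := by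
  set N := ∏ i ∈ t, max 1 (V i) with hN
  have hterm : ∀ i ∈ t, (∏ j ∈ t.erase i, V (i - j)) * (max 1 (V i)) ^ 2
      ≤ max 1 (V i) ^ t.card * N := by
    intro i hi
    have h1 : (∏ j ∈ t.erase i, V (i - j)) ≤
        ∏ j ∈ t.erase i, (max 1 (V i) * max 1 (V j)) :=
      Finset.prod_le_prod (fun _ _ => V.nonneg _) (fun j _ => na_sub_le_mul hV i j)
    rw [Finset.prod_mul_distrib, Finset.prod_const] at h1
    have h2 : (∏ j ∈ t.erase i, max 1 (V j)) * max 1 (V i) = N :=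
      Finset.prod_erase_mul t (fun j => max 1 (V j)) hi
    have h3 : (t.erase i).card + 1 = t.card := Finset.card_erase_add_one hi
    calc _ ≤ (max 1 (V i) ^ (t.erase i).card * ∏ j ∈ t.erase i, max 1 (V j)) *
          (max 1 (V i)) ^ 2 := by gcongr
      _ = _ := by rw [← h2, ← h3]; ring
  calc (∏ i ∈ t, ∏ j ∈ t.erase i, V (i - j)) * N ^ 2
      = ∏ i ∈ t, ((∏ j ∈ t.erase i, V (i - j)) * (max 1 (V i)) ^ 2) := by
        rw [Finset.prod_mul_distrib, Finset.prod_pow]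
    _ ≤ ∏ i ∈ t, (max 1 (V i) ^ t.card * N) := by
        apply Finset.prod_le_prod _ hterm
        intro i _
        exact mul_nonneg (Finset.prod_nonneg fun _ _ => V.nonneg _) (by positivity)
    _ = N ^ (2 * t.card) := by
        rw [Finset.prod_mul_distrib, Finset.prod_pow, Finset.prod_const, ← hN]; ring

/-- Key estimate: a close root of a polynomial with non-small discriminant. -/
lemma close_root [DecidableEq E] {V : AbsoluteValue E ℝ} (hV : IsNonarchimedean V)
    (s : Finset E) (hs : s.Nonempty) (a : E) (ha : a ≠ 0) (x : E)
    (hD : V a ≤ V a ^ (s.card - 1) * ∏ i ∈ s, (V a * ∏ j ∈ s.erase i, V (i - j))) :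
    ∃ α ∈ s, ∃ B : ℝ, V a ≤ B ∧ B * max 1 (V α) = V a * ∏ i ∈ s, max 1 (V i) ∧
      V (x - α) * B ^ 2 ≤ (V a * ∏ i ∈ s, V (x - i)) * B ^ s.card ∧
      V a * V (x - α) ^ s.card ≤ V a * ∏ i ∈ s, V (x - i) := by
  obtain ⟨α, hα, hmin⟩ := s.exists_min_image (fun i => V (x - i)) hs
  set t := s.erase α with ht
  have hcard : t.card + 1 = s.card := Finset.card_erase_add_one hα
  set N := ∏ i ∈ t, max 1 (V i) with hN
  have hN1 : 1 ≤ N := by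
    rw [hN]
    have := Finset.prod_le_prod (s := t) (f := fun _ => (1 : ℝ)) (g := fun i => max 1 (V i))
      (fun _ _ => zero_le_one) (fun i _ => le_max_left _ _)
    simpa using this
  have hVa : 0 < V a := V.pos ha
  set G := ∏ j ∈ t, V (α - j) with hG
  have hG0 : 0 ≤ G := Finset.prod_nonneg fun _ _ => V.nonneg _
  set W := ∏ i ∈ t, ∏ j ∈ t.erase i, V (i - j) with hW
  have hmain : V a ≤ V a ^ t.card * ((V a * G) * (V a ^ t.card * (G * W))) := by
    have e1 : ∏ i ∈ s, (V a * ∏ j ∈ s.erase i, V (i - j))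
        = (V a * G) * ∏ i ∈ t, (V a * ∏ j ∈ s.erase i, V (i - j)) :=
      (Finset.mul_prod_erase s (fun i => V a * ∏ j ∈ s.erase i, V (i - j)) hα).symm
    have e2 : ∏ i ∈ t, (V a * ∏ j ∈ s.erase i, V (i - j))
        = ∏ i ∈ t, (V a * (V (α - i) * ∏ j ∈ t.erase i, V (i - j))) := by
      apply Finset.prod_congr rfl
      intro i hi
      have hne : α ≠ i := (Finset.ne_of_mem_erase hi).symm
      rw [← Finset.mul_prod_erase (s.erase i) (fun j => V (i - j))
        (Finset.mem_erase.mpr ⟨hne, hα⟩), Finset.erase_right_comm, V.map_sub i α]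
    rw [e1, e2, Finset.prod_mul_distrib, Finset.prod_mul_distrib, Finset.prod_const] at hD
    rwa [show s.card - 1 = t.card by omega] at hD
  have hWN : W * N ^ 2 ≤ N ^ (2 * t.card) := prod_pairs_le hV t
  have hF : V a * N ≤ (V a * G) * (V a * N) ^ t.card := by
    refine (sq_le_sq₀ (by positivity) (by positivity)).mp ?_
    calc (V a * N) ^ 2 = V a * (V a * N ^ 2) := by ring
      _ ≤ (V a ^ t.card * ((V a * G) * (V a ^ t.card * (G * W)))) * (V a * N ^ 2) := by gcongr
      _ = (V a ^ t.card * (V a * G)) ^ 2 * (W * N ^ 2) := by ring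
      _ ≤ (V a ^ t.card * (V a * G)) ^ 2 * N ^ (2 * t.card) := by gcongr
      _ = _ := by ring
  have hfx : ∏ i ∈ s, V (x - i) = V (x - α) * ∏ i ∈ t, V (x - i) :=
    (Finset.mul_prod_erase s (fun i => V (x - i)) hα).symm
  have hGle : G ≤ ∏ i ∈ t, V (x - i) := by
    apply Finset.prod_le_prod (fun _ _ => V.nonneg _)
    intro i hi
    have h1 : V (x - α) ≤ V (x - i) := hmin i (Finset.mem_of_mem_erase hi)
    have h2 := na_sub_le hV (x - i) (x - α)
    rw [sub_sub_sub_cancel_left, max_eq_left h1] at h2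
    exact h2
  refine ⟨α, hα, V a * N, le_mul_of_one_le_right hVa.le hN1, ?_, ?_, ?_⟩
  · rw [mul_assoc, ← Finset.prod_erase_mul s (fun i => max 1 (V i)) hα]
  · have hx0 := V.nonneg (x - α)
    calc V (x - α) * (V a * N) ^ 2 = V (x - α) * (V a * N) * (V a * N) := by ring
      _ ≤ V (x - α) * (V a * N) * ((V a * G) * (V a * N) ^ t.card) := by gcongr
      _ ≤ V (x - α) * (V a * N) * ((V a * ∏ i ∈ t, V (x - i)) * (V a * N) ^ t.card) := by gcongr
      _ = _ := by rw [hfx, ← hcard]; ring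
  · gcongr
    rw [← Finset.prod_const]
    exact Finset.prod_le_prod (fun _ _ => V.nonneg _) (fun i hi => hmin i hi)

lemma gaussNorm_X_sub_C {V : AbsoluteValue E ℝ} (α : E) :
    (X - C α).gaussNorm V 1 = max 1 (V α) := by
  apply le_antisymm
  · obtain ⟨i, hi⟩ := (X - C α).exists_eq_gaussNorm V 1
    rw [hi, one_pow, mul_one]
    match i with
    | 0 => simp
    | 1 => simp
    | (n+2) => simp [coeff_X]
  · apply max_le
    · have h := (X - C α).le_gaussNorm V (c := 1) zero_le_one 1
      have e : (X - C α).coeff 1 = 1 := by simp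
      rwa [e, map_one, one_pow, mul_one] at h
    · have h := (X - C α).le_gaussNorm V (c := 1) zero_le_one 0
      have e : (X - C α).coeff 0 = -α := by simp
      rwa [e, AbsoluteValue.map_neg, pow_zero, mul_one] at h

lemma gaussNorm_prod {V : AbsoluteValue E ℝ} (hV : IsNonarchimedean V) (s : Finset E) (a : E) :
    (C a * ∏ i ∈ s, (X - C i)).gaussNorm V 1 = V a * ∏ i ∈ s, max 1 (V i) := by
  classical
  rw [gaussNorm_mul hV one_pos, gaussNorm_C]
  congr 1
  induction s using Finset.induction_on with
  | empty => rw [Finset.prod_empty, Finset.prod_empty, ← C_1, gaussNorm_C, map_one]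
  | insert i s hi ih =>
    rw [Finset.prod_insert hi, Finset.prod_insert hi, gaussNorm_mul hV one_pos, ih,
      gaussNorm_X_sub_C]
end generic

variable (Fq) in
/-- the embedding of `F_q(T)` into the algebraic closure -/
def liftφ : FractionRing (Polynomial Fq) →+* L Fq :=
  IsFractionRing.lift (φ_injective Fq)

lemma liftφ_comp : (liftφ Fq).comp (algebraMap (Polynomial Fq) (FractionRing (Polynomial Fq))) =
    φ Fq := by
  refine RingHom.ext fun c => ?_
  rw [RingHom.comp_apply, liftφ]
  exact IsFractionRing.lift_algebraMap (K := FractionRing (Polynomial Fq)) (φ_injective Fq) c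

lemma close_root_sep {v : L Fq → ℝ} (hv : IsAbsExt Fq v) (R : Polynomial (Polynomial Fq))
    (hR : Irreducible R) (hdeg : 0 < R.natDegree) (hder : derivative R ≠ 0) (x : L Fq)
    (hx1 : v ((R.map (φ Fq)).eval x) ≤ 1) :
    ∃ β : L Fq, (R.map (φ Fq)).eval β = 0 ∧
      v (x - β) ≤ v ((R.map (φ Fq)).eval x) * Hpoly Fq R ^ ((R.natDegree : ℝ) - 2) *
        max 1 (v x) := by
  classical
  set f := R.map (φ Fq) with hf
  have hinj := φ_injective Fq
  have hfd : f.natDegree = R.natDegree := Polynomial.natDegree_map_eq_of_injective hinj R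
  have hf0 : f ≠ 0 := by
    intro h; rw [h] at hfd; simp at hfd; omega
  have hsplit : f.Splits := IsAlgClosed.splits f
  -- separability
  have hsep : f.Separable := by
    have hprim : R.IsPrimitive := hR.isPrimitive hdeg.ne'
    have h1 := (hprim.irreducible_iff_irreducible_map_fraction_map
      (K := FractionRing (Polynomial Fq))).mp hR
    have h2 : (R.map (algebraMap _ (FractionRing (Polynomial Fq)))).Separable := by
      rw [separable_iff_derivative_ne_zero h1, derivative_map]
      rw [Ne, Polynomial.map_eq_zero_iff (IsFractionRing.injective _ _)]
      exact hder
    have h3 := h2.map (f := liftφ Fq)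
    rw [Polynomial.map_map, liftφ_comp] at h3
    exact h3
  have hnodup : f.roots.Nodup := nodup_roots hsep
  set s := f.roots.toFinset with hs
  have hprod : f = C f.leadingCoeff * ∏ i ∈ s, (X - C i) := by
    conv_lhs => rw [hsplit.eq_prod_roots]
    congr 1
    rw [Finset.prod, hs, Multiset.toFinset_val, hnodup.dedup]
  have hcard : s.card = R.natDegree := by
    rw [hs, Multiset.toFinset_card_of_nodup hnodup, ← hsplit.natDegree_eq_card_roots, hfd]
  set a := f.leadingCoeff with ha
  have ha0 : a ≠ 0 := leadingCoeff_ne_zero.mpr hf0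
  have haR : a = φ Fq R.leadingCoeff := by
    rw [ha, hf, leadingCoeff_map_of_injective hinj]
  have hVa1 : 1 ≤ absV hv a := by
    rw [haR, absV_φ]
    exact one_le_kabs_poly Fq (leadingCoeff_ne_zero.mpr hR.ne_zero)
  have hroot : ∀ i ∈ s, f.eval i = 0 := by
    intro i hi
    rw [hs, Multiset.mem_toFinset, mem_roots hf0] at hi
    exact hi
  -- derivative at a root
  have hderiv : ∀ i ∈ s, f.derivative.eval i = a * ∏ j ∈ s.erase i, (i - j) := by
    intro i hi
    conv_lhs => rw [hprod, ← Finset.mul_prod_erase s _ hi]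
    simp [derivative_mul, eval_prod]
  have hevalx : f.eval x = a * ∏ i ∈ s, (x - i) := by
    conv_lhs => rw [hprod]
    simp [eval_prod]
  have hD : absV hv a ≤ absV hv a ^ (s.card - 1) *
      ∏ i ∈ s, (absV hv a * ∏ j ∈ s.erase i, absV hv (i - j)) := by
    have hres := resultant_eq_prod_eval f f.derivative (f.natDegree - 1)
      (natDegree_derivative_le f) hsplit
    have hres2 : resultant f f.derivative f.natDegree (f.natDegree - 1) =
        φ Fq (resultant R R.derivative R.natDegree (R.natDegree - 1)) := by
      rw [hfd, hf, derivative_map, resultant_map_map]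
    rw [resultant_deriv (natDegree_pos_iff_degree_pos.mp hdeg)] at hres2
    rw [hres2, map_mul, map_mul, ← haR] at hres
    have hms : (f.roots.map (fun y => f.derivative.eval y)).prod
        = ∏ i ∈ s, f.derivative.eval i := by
      rw [Finset.prod, hs, Multiset.toFinset_val, hnodup.dedup]
    have hres3 := congrArg (absV hv) hres
    rw [show (f.roots.map (eval · f.derivative)).prod = ∏ i ∈ s, f.derivative.eval i from hms]
      at hres3
    simp only [map_mul, map_pow, map_neg, map_one, AbsoluteValue.map_neg, one_pow, one_mul,
      map_prod] at hres3
    have hcc : f.natDegree - 1 = s.card - 1 := by rw [hcard, hfd]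
    have e : ∏ i ∈ s, absV hv (f.derivative.eval i)
        = ∏ i ∈ s, (absV hv a * ∏ j ∈ s.erase i, absV hv (i - j)) := by
      apply Finset.prod_congr rfl
      intro i hi
      rw [hderiv i hi, map_mul, map_prod]
    rw [e, hcc] at hres3
    rw [← hres3]
    have hdne : R.discr ≠ 0 := by
      intro h0
      rw [h0] at hres3
      simp only [map_zero, mul_zero] at hres3
      have : (0 : ℝ) < absV hv a ^ (s.card - 1) *
          ∏ i ∈ s, (absV hv a * ∏ j ∈ s.erase i, absV hv (i - j)) := by
        apply mul_pos (by positivity)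
        apply Finset.prod_pos
        intro i hi
        apply mul_pos (by positivity)
        apply Finset.prod_pos
        intro j hj
        exact (absV hv).pos (sub_ne_zero.mpr (Finset.ne_of_mem_erase hj).symm)
      linarith
    have := one_le_kabs_poly Fq hdne
    rw [← absV_φ hv] at this
    exact le_mul_of_one_le_right (by positivity) this
  have hsne : s.Nonempty := by
    rw [← Finset.card_pos, hcard]; exact hdeg
  obtain ⟨β, hβ, B, hB1, hB2, hB3, hB4⟩ := close_root (absV_na hv) s hsne a ha0 x hD
  have hvx : v (f.eval x) = absV hv a * ∏ i ∈ s, absV hv (x - i) := by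
    rw [← absV_apply hv, hevalx, map_mul, map_prod]
  rw [← hvx, hcard] at hB3 hB4
  have hH : Hpoly Fq R = B * max 1 (v β) := by
    rw [Hpoly_eq_gauss hv, ← hf, hprod, gaussNorm_prod (absV_na hv), ← hB2, absV_apply]
  refine ⟨β, hroot β hβ, ?_⟩
  have hB1' : 1 ≤ B := hVa1.trans hB1
  set d := R.natDegree with hd
  set δ := v (x - β) with hδ
  have hδ0 : 0 ≤ δ := hv.nonneg _
  have hδ1 : δ ≤ 1 := by
    by_contra h
    push Not at h
    have : 1 < δ ^ d := one_lt_pow₀ h hdeg.ne'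
    have h2 : (1 : ℝ) < absV hv a * δ ^ d := by nlinarith
    exact absurd (h2.trans_le hB4) (not_lt.mpr hx1)
  set M := max 1 (v β) with hM
  have hM1 : 1 ≤ M := le_max_left _ _
  have hMx : M ≤ max 1 (v x) := by
    apply max_le (le_max_left _ _)
    have := na_sub_le (absV_na hv) x (x - β)
    rw [sub_sub_cancel] at this
    refine this.trans (max_le (le_max_right _ _) (hδ1.trans (le_max_left _ _)))
  have hBpos : 0 < B := by linarith
  have hfx0 : 0 ≤ v (f.eval x) := hv.nonneg _
  have h1 : δ ≤ v (f.eval x) * B ^ ((d : ℝ) - 2) := by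
    rw [Real.rpow_sub hBpos, Real.rpow_natCast, Real.rpow_two, ← mul_div_assoc,
      le_div_iff₀ (by positivity)]
    exact hB3
  have h2 : B ^ ((d : ℝ) - 2) ≤ Hpoly Fq R ^ ((d : ℝ) - 2) * M := by
    rw [hH, Real.mul_rpow hBpos.le (by positivity), mul_assoc]
    apply le_mul_of_one_le_right (by positivity)
    nth_rewrite 2 [← Real.rpow_one M]
    rw [← Real.rpow_add (by positivity)]
    apply Real.one_le_rpow hM1
    have : (1 : ℝ) ≤ d := by exact_mod_cast hdeg
    linarith
  have hH0 : 0 ≤ Hpoly Fq R := by rw [hH]; positivity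
  calc δ ≤ v (f.eval x) * B ^ ((d : ℝ) - 2) := h1
    _ ≤ v (f.eval x) * (Hpoly Fq R ^ ((d : ℝ) - 2) * M) := by gcongr
    _ ≤ v (f.eval x) * (Hpoly Fq R ^ ((d : ℝ) - 2) * max 1 (v x)) := by gcongr
    _ = _ := by ring

end

section

variable {Fq}

lemma evalL_eq (P : Polynomial (Polynomial Fq)) (α : L Fq) :
    evalL Fq P α = (P.map (φ Fq)).eval α := by
  rw [evalL, Polynomial.eval_map]

lemma minPoly_dvd {P Q : Polynomial (Polynomial Fq)} {α : L Fq}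
    (hP : IsMinPolyOf Fq P α) (hQ : IsMinPolyOf Fq Q α) : P ∣ Q := by
  obtain ⟨_, hPi, hPp, _, hP0⟩ := hP
  obtain ⟨_, hQi, hQp, _, hQ0⟩ := hQ
  rw [hPp.dvd_iff_fraction_map_dvd_fraction_map (K := FractionRing (Polynomial Fq))]
  by_contra hnd
  have hPi' := (hPp.irreducible_iff_irreducible_map_fraction_map
      (K := FractionRing (Polynomial Fq))).mp hPi
  have hcop := (hPi'.coprime_iff_not_dvd).mpr hnd
  have hcop2 := hcop.map (Polynomial.mapRingHom (liftφ Fq))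
  simp only [Polynomial.coe_mapRingHom, Polynomial.map_map, liftφ_comp] at hcop2
  obtain ⟨a, b, hab⟩ := hcop2
  have h := congrArg (Polynomial.eval α) hab
  rw [evalL_eq] at hP0 hQ0
  simp [hP0, hQ0] at h

lemma minPoly_unique {P Q : Polynomial (Polynomial Fq)} {α : L Fq}
    (hP : IsMinPolyOf Fq P α) (hQ : IsMinPolyOf Fq Q α) : P = Q := by
  obtain ⟨u, hu⟩ := associated_of_dvd_dvd (minPoly_dvd hP hQ) (minPoly_dvd hQ hP)
  obtain ⟨r, hr, hr2⟩ := Polynomial.isUnit_iff.mp u.isUnit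
  obtain ⟨s, hs, hs2⟩ := Polynomial.isUnit_iff.mp hr
  have h1 : P.leadingCoeff.leadingCoeff = 1 := hP.2.2.2.1
  have h2 : Q.leadingCoeff.leadingCoeff = 1 := hQ.2.2.2.1
  rw [← hu, ← hr2, ← hs2, leadingCoeff_mul, leadingCoeff_mul, h1, leadingCoeff_C, leadingCoeff_C,
    one_mul] at h2
  rw [← hu, ← hr2, ← hs2, h2]
  simp

lemma minPolyPrim_spec {α : L Fq} (h : IsAlgElem Fq α) : IsMinPolyOf Fq (minPolyPrim Fq α) α := by
  unfold minPolyPrim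
  rw [dif_pos h]
  exact h.choose_spec

lemma minPolyPrim_eq {Q : Polynomial (Polynomial Fq)} {α : L Fq} (h : IsMinPolyOf Fq Q α) :
    minPolyPrim Fq α = Q := minPoly_unique (minPolyPrim_spec ⟨Q, h⟩) h

/-- normalisation by a unit -/
lemma exists_normalize {v : L Fq → ℝ} (hv : IsAbsExt Fq v) {Q : Polynomial (Polynomial Fq)}
    (hQ : Q ≠ 0) : ∃ Q' : Polynomial (Polynomial Fq), Associated Q Q' ∧ Q'.leadingCoeff.Monic ∧
      Q'.natDegree = Q.natDegree ∧
      Hpoly Fq Q' = Hpoly Fq Q ∧ ∀ ξ, kabs Fq (evalK Fq Q' ξ) = kabs Fq (evalK Fq Q ξ) := by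
  set c := Q.leadingCoeff.leadingCoeff with hc
  have hc0 : c ≠ 0 := leadingCoeff_ne_zero.mpr (leadingCoeff_ne_zero.mpr hQ)
  have hci : c⁻¹ ≠ 0 := inv_ne_zero hc0
  have hk : kabs Fq (polyToK Fq (C c⁻¹)) = 1 := by
    rw [kabs_poly Fq (by simpa using hc0)]; simp
  refine ⟨Q * C (C c⁻¹), ?_, ?_, ?_, ?_, ?_⟩
  · have hu : IsUnit (C (C c⁻¹) : Polynomial (Polynomial Fq)) :=
      ((isUnit_iff_ne_zero.mpr hci).map (C : Fq →+* _)).map (C : Polynomial Fq →+* _)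
    exact (associated_mul_unit_right Q _ hu)
  · rw [Monic, leadingCoeff_mul, leadingCoeff_mul, leadingCoeff_C, leadingCoeff_C, ← hc]
    exact mul_inv_cancel₀ hc0
  · exact natDegree_mul_C (by simpa using hc0)
  · rw [Hpoly_mul hv, Hpoly_C, hk, mul_one]
  · intro ξ
    rw [evalK, eval₂_mul, eval₂_C, kabs_mul hv, hk, mul_one]
    rfl

lemma p_prime : (ringChar Fq).Prime :=
  (CharP.char_is_prime_or_zero Fq (ringChar Fq)).resolve_right (CharP.ringChar_ne_zero_of_finite Fq)

instance : CharP (Polynomial Fq) (ringChar Fq) := inferInstance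

/-- separable/inseparable decomposition -/
lemma exists_insep (Q : Polynomial (Polynomial Fq)) (hQ : Irreducible Q) (hd : 0 < Q.natDegree) :
    ∃ (j : ℕ) (R : Polynomial (Polynomial Fq)), Q = expand _ (ringChar Fq ^ j) R ∧
      Irreducible R ∧ 0 < R.natDegree ∧ derivative R ≠ 0 := by
  have hp : (ringChar Fq).Prime := p_prime
  induction hm : Q.natDegree using Nat.strong_induction_on generalizing Q with
  | _ m ih =>
    by_cases hder : derivative Q = 0
    · have hexp := expand_contract (ringChar Fq) hder hp.ne_zero
      set Q1 := contract (ringChar Fq) Q with hQ1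
      have hi : Irreducible Q1 := by
        apply of_irreducible_expand hp.ne_zero
        rw [hexp]; exact hQ
      have hdeg : Q.natDegree = Q1.natDegree * ringChar Fq := by
        conv_lhs => rw [← hexp, natDegree_expand]
      have hpos : 0 < Q1.natDegree := by
        rcases Nat.eq_zero_or_pos Q1.natDegree with h | h
        · rw [h] at hdeg; omega
        · exact h
      obtain ⟨j, R, h1, h2, h3, h4⟩ := ih Q1.natDegree (by
        rw [← hm, hdeg]; exact lt_mul_of_one_lt_right hpos hp.one_lt) Q1 hi hpos rfl
      refine ⟨j + 1, R, ?_, h2, h3, h4⟩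
      rw [← hexp, h1, expand_expand, pow_succ']
    · exact ⟨0, Q, by simp, hQ, hd, hder⟩

lemma toL_ξ {v : L Fq → ℝ} (hv : IsAbsExt Fq v) (ξ : K Fq) : v (toL Fq ξ) = kabs Fq ξ :=
  hv.extends_kabs ξ

lemma core {v : L Fq → ℝ} (hv : IsAbsExt Fq v) (ξ : K Fq) (j : ℕ)
    (R : Polynomial (Polynomial Fq)) (hR : Irreducible R) (hd : 0 < R.natDegree)
    (hder : derivative R ≠ 0) (Q : Polynomial (Polynomial Fq))
    (hQ : Q = expand _ (ringChar Fq ^ j) R) (h1 : kabs Fq (evalK Fq Q ξ) ≤ 1) :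
    ∃ α : L Fq, evalL Fq Q α = 0 ∧
      v (toL Fq ξ - α) ^ (ringChar Fq ^ j) ≤ kabs Fq (evalK Fq Q ξ) *
        Hpoly Fq Q ^ ((R.natDegree : ℝ) - 2) * max 1 (kabs Fq ξ) ^ (ringChar Fq ^ j) := by
  have hp : (ringChar Fq).Prime := p_prime
  set f := ringChar Fq ^ j with hf
  have hf0 : 0 < f := pow_pos hp.pos j
  have hH : Hpoly Fq Q = Hpoly Fq R := by rw [hQ, Hpoly_expand _ hf0]
  have hev : ∀ y : L Fq, (Q.map (φ Fq)).eval y = (R.map (φ Fq)).eval (y ^ f) := by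
    intro y
    rw [hQ, map_expand, expand_eval]
  have hk : kabs Fq (evalK Fq Q ξ) = v ((R.map (φ Fq)).eval (toL Fq ξ ^ f)) := by
    rw [← hev, ← toL_evalK, toL_ξ hv]
  rw [hk] at h1
  obtain ⟨β, hβ, hle⟩ := close_root_sep hv R hR hd hder (toL Fq ξ ^ f) h1
  obtain ⟨α, hα⟩ := IsAlgClosed.exists_pow_nat_eq β hf0
  refine ⟨α, ?_, ?_⟩
  · rw [evalL_eq, hev, hα, hβ]
  · have hchar : CharP (L Fq) (ringChar Fq) := by
      have : CharP (Polynomial Fq) (ringChar Fq) := inferInstance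
      exact charP_of_injective_ringHom (φ_injective Fq) (ringChar Fq)
    have : Fact (ringChar Fq).Prime := ⟨hp⟩
    have e : v (toL Fq ξ - α) ^ f = v (toL Fq ξ ^ f - β) := by
      rw [← hα, ← absV_apply hv, ← absV_apply hv, ← map_pow, hf, sub_pow_char_pow]
    rw [e, hk, hH]
    refine hle.trans (mul_le_mul_of_nonneg_left ?_ ?_)
    · rw [← absV_apply hv, map_pow, absV_toL]
      refine max_le (one_le_pow₀ (le_max_left _ _)) ?_
      exact pow_le_pow_left₀ (kabs_nonneg _) (le_max_right _ _) _
    · have : 0 ≤ Hpoly Fq R := zero_le_one.trans (one_le_Hpoly hR.ne_zero)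
      exact mul_nonneg (hv.nonneg _) (Real.rpow_nonneg this _)

/-- The set of normalised irreducible polynomials with `|Q(ξ)|` small. -/
def SS (n : ℕ) (ξ : K Fq) (w : ℝ) : Set (Polynomial (Polynomial Fq)) :=
  {Q | Irreducible Q ∧ Q.leadingCoeff.Monic ∧ 0 < Q.natDegree ∧ Q.natDegree ≤ n ∧
    0 < kabs Fq (evalK Fq Q ξ) ∧ kabs Fq (evalK Fq Q ξ) ≤ Hpoly Fq Q ^ (-w)}

lemma evalK_mul (P Q : Polynomial (Polynomial Fq)) (ξ : K Fq) :
    evalK Fq (P * Q) ξ = evalK Fq P ξ * evalK Fq Q ξ := eval₂_mul _ _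

lemma SS_infinite {v : L Fq → ℝ} (hv : IsAbsExt Fq v) (n : ℕ) (ξ : K Fq) (w w' : ℝ)
    (hw' : 0 < w') (hlt : w' < w)
    (hinf : {P : Polynomial (Polynomial Fq) | P.natDegree ≤ n ∧ 0 < kabs Fq (evalK Fq P ξ) ∧
      kabs Fq (evalK Fq P ξ) ≤ Hpoly Fq P ^ (-w)}.Infinite) :
    (SS n ξ w').Infinite := by
  intro hfin
  -- a uniform constant
  obtain ⟨c, hc0, hc1, hc⟩ : ∃ c : ℝ, 0 < c ∧ c ≤ 1 ∧
      ∀ Q ∈ SS n ξ w', c ≤ kabs Fq (evalK Fq Q ξ) := by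
    have key : ∀ S : Set (Polynomial (Polynomial Fq)), S.Finite →
        (∀ Q ∈ S, 0 < kabs Fq (evalK Fq Q ξ)) → ∃ c : ℝ, 0 < c ∧ c ≤ 1 ∧
          ∀ Q ∈ S, c ≤ kabs Fq (evalK Fq Q ξ) := by
      intro S hS
      induction S, hS using Set.Finite.induction_on with
      | empty => intro _; exact ⟨1, one_pos, le_rfl, by simp⟩
      | insert _ _ ih =>
        intro h
        obtain ⟨c, h0, h1, h2⟩ := ih (fun Q hQ => h Q (Set.mem_insert_of_mem _ hQ))
        refine ⟨min c (kabs Fq (evalK Fq _ ξ)), lt_min h0 (h _ (Set.mem_insert _ _)),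
          (min_le_left _ _).trans h1, ?_⟩
        rintro Q (rfl | hQ)
        · exact min_le_right _ _
        · exact (min_le_left _ _).trans (h2 Q hQ)
    exact key _ hfin (fun Q hQ => hQ.2.2.2.2.1)
  have hirr : ∀ Q : Polynomial (Polynomial Fq), Irreducible Q → Q.natDegree ≤ n →
      evalK Fq Q ξ ≠ 0 →
      c ^ Q.natDegree * Hpoly Fq Q ^ (-w') ≤ kabs Fq (evalK Fq Q ξ) := by
    intro Q hQ hdeg hne
    have hH1 : 1 ≤ Hpoly Fq Q := one_le_Hpoly hQ.ne_zero
    have hHw : Hpoly Fq Q ^ (-w') ≤ 1 := Real.rpow_le_one_of_one_le_of_nonpos hH1 (by linarith)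
    rcases Nat.eq_zero_or_pos Q.natDegree with h0 | hpos
    · rw [h0, pow_zero, one_mul]
      rw [eq_C_of_natDegree_eq_zero h0, evalK, eval₂_C] at hne ⊢
      refine le_trans ?_ (one_le_kabs_poly Fq (c := Q.coeff 0) ?_)
      · rw [← eq_C_of_natDegree_eq_zero h0]; exact hHw
      · rintro h; rw [h] at hne; simp at hne
    · obtain ⟨Q', hass, hmon, hdeg', hH, hev⟩ := exists_normalize hv hQ.ne_zero
      have hcd : c ^ Q.natDegree ≤ c := pow_le_of_le_one hc0.le hc1 hpos.ne'
      by_cases hmem : Q' ∈ SS n ξ w'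
      · have := hc Q' hmem
        rw [hev] at this
        refine le_trans ?_ this
        calc _ ≤ c * 1 := by gcongr
          _ = c := mul_one c
      · have : ¬ kabs Fq (evalK Fq Q' ξ) ≤ Hpoly Fq Q' ^ (-w') := by
          intro hle
          apply hmem
          refine ⟨hass.irreducible hQ, hmon, by omega, by omega, ?_, hle⟩
          rw [hev]; exact (kabs_pos hv).mpr hne
        rw [hev, hH] at this
        push Not at this
        refine le_trans ?_ this.le
        apply mul_le_of_le_one_left (by positivity) (hcd.trans hc1)
  have hall : ∀ P : Polynomial (Polynomial Fq), P.natDegree ≤ n → evalK Fq P ξ ≠ 0 →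
      c ^ P.natDegree * Hpoly Fq P ^ (-w') ≤ kabs Fq (evalK Fq P ξ) := by
    intro P
    induction P using WfDvdMonoid.induction_on_irreducible with
    | zero => intro _ h; exact absurd (by simp [evalK]) h
    | unit u hu =>
      intro _ hne
      obtain ⟨r, hr, rfl⟩ := Polynomial.isUnit_iff.mp hu
      rw [natDegree_C, pow_zero, one_mul]
      rw [evalK, eval₂_C] at hne ⊢
      have hr0 : r ≠ 0 := hr.ne_zero
      refine le_trans ?_ (one_le_kabs_poly Fq hr0)
      exact Real.rpow_le_one_of_one_le_of_nonpos (one_le_Hpoly (by simpa using hr0)) (by linarith)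
    | mul a i ha hi ih =>
      intro hdeg hne
      rw [natDegree_mul hi.ne_zero ha] at hdeg
      rw [evalK_mul] at hne
      have h1 := hirr i hi (by omega) (left_ne_zero_of_mul hne)
      have h2 := ih (by omega) (right_ne_zero_of_mul hne)
      have hHi : 0 ≤ Hpoly Fq i := zero_le_one.trans (one_le_Hpoly hi.ne_zero)
      have hHa : 0 ≤ Hpoly Fq a := zero_le_one.trans (one_le_Hpoly ha)
      rw [natDegree_mul hi.ne_zero ha, Hpoly_mul hv, Real.mul_rpow hHi hHa, evalK_mul,
        kabs_mul hv, pow_add]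
      calc _ = (c ^ i.natDegree * Hpoly Fq i ^ (-w')) * (c ^ a.natDegree * Hpoly Fq a ^ (-w')) := by
            ring
        _ ≤ _ := mul_le_mul h1 h2 (by positivity) (kabs_nonneg _)
  -- heights are bounded
  have hδ : 0 < w - w' := by linarith
  apply hinf
  apply (finite_height (Fq := Fq) n ((c ^ n)⁻¹ ^ (w - w')⁻¹)).subset
  rintro P ⟨hdeg, hpos, hle⟩
  refine ⟨hdeg, ?_⟩
  have hP0 : P ≠ 0 := by rintro rfl; simp [evalK, kabs_zero] at hpos
  have hH1 := one_le_Hpoly hP0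
  have hHpos : 0 < Hpoly Fq P := by linarith
  have h1 := (hall P hdeg ((kabs_pos hv).mp hpos)).trans hle
  have h2 : c ^ n ≤ c ^ P.natDegree := pow_le_pow_of_le_one hc0.le hc1 hdeg
  have h3 : c ^ n * Hpoly Fq P ^ (-w') ≤ Hpoly Fq P ^ (-w) :=
    le_trans (by gcongr) h1
  have h4 : Hpoly Fq P ^ (w - w') ≤ (c ^ n)⁻¹ := by
    rw [le_inv_comm₀ (by positivity) (by positivity), ← Real.rpow_neg hHpos.le,
      show -(w - w') = -w - -w' by ring, Real.rpow_sub hHpos, le_div_iff₀ (by positivity)]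
    exact h3
  have h5 := Real.rpow_le_rpow (by positivity) h4 (inv_pos.mpr hδ).le
  rwa [← Real.rpow_mul hHpos.le, mul_inv_cancel₀ hδ.ne', Real.rpow_one] at h5

end

section

variable {Fq}

lemma SS_minPoly {n : ℕ} {ξ : K Fq} {w : ℝ} {Q : Polynomial (Polynomial Fq)}
    (hQ : Q ∈ SS n ξ w) {α : L Fq} (hα : evalL Fq Q α = 0) : IsMinPolyOf Fq Q α :=
  ⟨hQ.2.2.1, hQ.1, hQ.1.isPrimitive hQ.2.2.1.ne', hQ.2.1, hα⟩

lemma star_of_family {v : L Fq → ℝ} (hv : IsAbsExt Fq v) (n : ℕ) (ξ : K Fq) (w : ℝ) (hw : 0 < w)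
    (F : ℕ) (S : Set (Polynomial (Polynomial Fq))) (hS : S ⊆ SS n ξ w) (hinf : S.Infinite)
    (hdec : ∀ Q ∈ S, ∃ (j : ℕ) (R : Polynomial (Polynomial Fq)),
      Q = expand _ (ringChar Fq ^ j) R ∧ Irreducible R ∧ 0 < R.natDegree ∧ derivative R ≠ 0 ∧
      ringChar Fq ^ j ≤ F) (ε : ℝ) (hε : 0 < ε) :
    (((w + 2) / F - n - 1 - ε : ℝ) : EReal) ≤ wStarExp Fq v n ξ := by
  have hp : (ringChar Fq).Prime := p_prime
  set Cc := max 1 (kabs Fq ξ) with hCc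
  have hC1 : 1 ≤ Cc := le_max_left _ _
  set y := (w + 2) / F - n - 1 - ε with hy
  have hroot : ∀ Q ∈ S, ∃ α : L Fq, evalL Fq Q α = 0 ∧
      (Cc ^ (1 / ε) ≤ Hpoly Fq Q → v (toL Fq ξ - α) ≤ Hpoly Fq Q ^ (-y - 1)) := by
    intro Q hQ
    obtain ⟨j, R, hQR, hR, hd, hder, hF⟩ := hdec Q hQ
    obtain ⟨hQi, hmon, hQd, hQn, hpos, hle⟩ := hS hQ
    have hH1 : 1 ≤ Hpoly Fq Q := one_le_Hpoly hQi.ne_zero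
    have hH0 : 0 < Hpoly Fq Q := by linarith
    have hle1 : kabs Fq (evalK Fq Q ξ) ≤ 1 :=
      hle.trans (Real.rpow_le_one_of_one_le_of_nonpos hH1 (by linarith))
    obtain ⟨α, hα, hb⟩ := core hv ξ j R hR hd hder Q hQR hle1
    refine ⟨α, hα, fun hHC => ?_⟩
    set f := ringChar Fq ^ j with hf
    set e := R.natDegree with he
    have hf0 : 0 < f := pow_pos hp.pos j
    have hfR : (1 : ℝ) ≤ f := by exact_mod_cast hf0
    have hFR : (f : ℝ) ≤ F := by exact_mod_cast hF
    have hen : e ≤ n := by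
      rw [hQR, natDegree_expand] at hQn
      exact (Nat.le_mul_of_pos_right _ hf0).trans hQn
    have henR : (e : ℝ) ≤ n := by exact_mod_cast hen
    have he0 : (0 : ℝ) ≤ e := by positivity
    set H := Hpoly Fq Q with hH
    have h1 : v (toL Fq ξ - α) ^ f ≤ (Cc * H ^ ((-w + (e - 2)) / f)) ^ f := by
      refine hb.trans ?_
      rw [mul_pow, ← Real.rpow_mul_natCast hH0.le, div_mul_cancel₀ _ (by positivity),
        Real.rpow_add hH0, mul_comm (Cc ^ f)]
      gcongr
    have h2 : v (toL Fq ξ - α) ≤ Cc * H ^ ((-w + (e - 2)) / f) :=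
      (pow_le_pow_iff_left₀ (hv.nonneg _) (by positivity) hf0.ne').mp h1
    have h3 : Cc ≤ H ^ ε := by
      have := Real.rpow_le_rpow (by positivity) hHC hε.le
      rwa [← Real.rpow_mul (by positivity), one_div, inv_mul_cancel₀ hε.ne', Real.rpow_one] at this
    have h4 : (-w + (e - 2)) / f ≤ -((w + 2) / F) + n := by
      have a1 : (w + 2) / F ≤ (w + 2) / f := by gcongr
      have a2 : (e : ℝ) / f ≤ n := (div_le_self he0 hfR).trans henR
      have a3 : (-w + (e - 2)) / f = -((w + 2) / f) + (e : ℝ) / f := by ring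
      rw [a3]; linarith
    calc v (toL Fq ξ - α) ≤ Cc * H ^ ((-w + (e - 2)) / f) := h2
      _ ≤ H ^ ε * H ^ (-((w + 2) / F) + n : ℝ) := by
        apply mul_le_mul h3 (Real.rpow_le_rpow_of_exponent_le hH1 h4) (by positivity)
          (by positivity)
      _ = H ^ (-y - 1) := by
        rw [← Real.rpow_add hH0]; congr 1; rw [hy]; ring
  choose! r hr0 hr using hroot
  set S' := S \ {P | P.natDegree ≤ n ∧ Hpoly Fq P ≤ Cc ^ (1 / ε)} with hS'
  have hS'inf : S'.Infinite := hinf.diff (finite_height n _)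
  have hinj : Set.InjOn r S' := by
    intro P hP Q hQ hPQ
    have h1 := minPolyPrim_eq (SS_minPoly (hS hP.1) (hr0 P hP.1))
    have h2 := minPolyPrim_eq (SS_minPoly (hS hQ.1) (hr0 Q hQ.1))
    rw [← h1, ← h2, hPQ]
  apply le_sSup
  refine ⟨y, rfl, ?_⟩
  refine (hS'inf.image hinj).mono ?_
  rintro _ ⟨Q, hQ, rfl⟩
  have hQS := hS hQ.1
  have hmin := SS_minPoly hQS (hr0 Q hQ.1)
  have hmp := minPolyPrim_eq hmin
  refine ⟨⟨Q, hmin⟩, ?_, ?_, ?_⟩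
  · rw [degAlg, hmp]; exact hQS.2.2.2.1
  · rw [← absV_apply hv]
    apply (absV hv).pos
    rw [sub_ne_zero]
    intro h
    have h0 := hr0 Q hQ.1
    rw [← h, evalL_eq, ← toL_evalK] at h0
    have h5 : evalK Fq Q ξ = 0 := (algebraMap (K Fq) (L Fq)).injective (by
      rw [map_zero]; exact h0)
    exact (kabs_pos hv).mp hQS.2.2.2.2.1 h5
  · rw [heightAlg, hmp]
    apply hr Q hQ.1
    have := hQ.2
    simp only [Set.mem_setOf_eq, not_and, not_le] at this
    exact (this hQS.2.2.2.1).le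

lemma exists_min_of_root {v : L Fq → ℝ} (hv : IsAbsExt Fq v) (α : L Fq)
    (P : Polynomial (Polynomial Fq)) (hP : P ≠ 0) (h0 : evalL Fq P α = 0) :
    ∃ M, IsMinPolyOf Fq M α ∧ M.natDegree ≤ P.natDegree ∧ Hpoly Fq M ≤ Hpoly Fq P := by
  induction P using WfDvdMonoid.induction_on_irreducible with
  | zero => exact absurd rfl hP
  | unit u hu =>
    exfalso
    have := hu.map (Polynomial.eval₂RingHom (φ Fq) α)
    rw [Polynomial.coe_eval₂RingHom] at this
    exact this.ne_zero h0
  | mul a i ha hi ih =>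
    rw [evalL, eval₂_mul, mul_eq_zero] at h0
    rw [natDegree_mul hi.ne_zero ha, Hpoly_mul hv]
    have h1 := one_le_Hpoly hi.ne_zero
    have h2 := one_le_Hpoly ha
    rcases h0 with h0 | h0
    · have hpos : 0 < i.natDegree := by
        by_contra h
        rw [eq_C_of_natDegree_eq_zero (by omega : i.natDegree = 0), eval₂_C] at h0
        have h3 : i.coeff 0 = 0 := φ_injective Fq (by rw [h0, map_zero])
        apply hi.ne_zero
        rw [eq_C_of_natDegree_eq_zero (by omega : i.natDegree = 0), h3, C_0]
      obtain ⟨M, hass, hmon, hdeg, hH, _⟩ := exists_normalize hv hi.ne_zero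
      have hMi := hass.irreducible hi
      refine ⟨M, ⟨by omega, hMi, hMi.isPrimitive (by omega), hmon, ?_⟩, by omega, ?_⟩
      · obtain ⟨u, hu⟩ := hass
        rw [← hu, evalL, eval₂_mul, h0, zero_mul]
      · rw [hH]; nlinarith
    · obtain ⟨M, hM, hdeg, hH⟩ := ih ha h0
      exact ⟨M, hM, by omega, by nlinarith⟩

lemma kabs_one {v : L Fq → ℝ} (hv : IsAbsExt Fq v) : kabs Fq 1 = 1 := by
  rw [← absV_toL hv, map_one, map_one]

lemma star_nonneg {v : L Fq → ℝ} (hv : IsAbsExt Fq v) (n : ℕ) (hn : 1 ≤ n) (ξ : K Fq) :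
    0 ≤ wStarExp Fq v n ξ := by
  have key : ∀ ε : ℝ, 0 < ε → ε < 1 → ((-ε : ℝ) : EReal) ≤ wStarExp Fq v n ξ := by
    intro ε hε hε1
    apply le_sSup
    refine ⟨-ε, rfl, ?_⟩
    have hq := one_lt_qq Fq
    have hq0 : 0 < qq Fq := by linarith
    choose a ha using fun m : ℕ => exists_poly_part Fq (polyToK Fq (X ^ m) * ξ)
    have hXm : ∀ m : ℕ, kabs Fq (polyToK Fq (X ^ m)) = qq Fq ^ m := by
      intro m
      rw [kabs_poly Fq (pow_ne_zero _ X_ne_zero), natDegree_X_pow]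
    have hXne : ∀ m : ℕ, polyToK Fq (X ^ m) ≠ 0 := by
      intro m
      rw [← kabs_pos hv, hXm]; positivity
    set A : ℕ → K Fq := fun m => polyToK Fq (a m + 1) / polyToK Fq (X ^ m) with hA
    have hdist1 : ∀ m, kabs Fq (polyToK Fq (X ^ m) * ξ - polyToK Fq (a m + 1)) = 1 := by
      intro m
      have e : polyToK Fq (X ^ m) * ξ - polyToK Fq (a m + 1) =
        (polyToK Fq (X ^ m) * ξ - polyToK Fq (a m)) - 1 := by rw [map_add, map_one]; ring
      have hlt : kabs Fq (polyToK Fq (X ^ m) * ξ - polyToK Fq (a m)) < 1 :=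
        (ha m).trans_lt (inv_lt_one_of_one_lt₀ hq)
      rw [e, ← absV_toL hv, map_sub, map_one]
      rw [← absV_toL hv] at hlt
      set z := toL Fq (polyToK Fq (X ^ m) * ξ - polyToK Fq (a m))
      have h1 := IsNonarchimedean.add_eq_right_of_lt (absV_na hv) (x := z) (y := -1)
        (by rw [AbsoluteValue.map_neg, map_one]; exact hlt)
      rw [sub_eq_add_neg, h1, AbsoluteValue.map_neg, map_one]
    have hdist : ∀ m, v (toL Fq ξ - toL Fq (A m)) = (qq Fq ^ m)⁻¹ := by
      intro m
      have e : polyToK Fq (X ^ m) * (ξ - A m) =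
          polyToK Fq (X ^ m) * ξ - polyToK Fq (a m + 1) := by
        rw [hA]; simp only; rw [mul_sub, mul_div_cancel₀ _ (hXne m)]
      have h1 := hdist1 m
      rw [← e, kabs_mul hv, hXm] at h1
      rw [← map_sub, toL_ξ hv]
      exact eq_inv_of_mul_eq_one_right h1
    set Cc := max 1 (kabs Fq ξ) with hCc
    have hC1 : 1 ≤ Cc := le_max_left _ _
    have hC2 : kabs Fq ξ ≤ Cc := le_max_right _ _
    have hex : ∀ m, ∃ M, IsMinPolyOf Fq M (toL Fq (A m)) ∧ M.natDegree ≤ 1 ∧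
        Hpoly Fq M ≤ Cc * qq Fq ^ m := by
      intro m
      set P : Polynomial (Polynomial Fq) := C (X ^ m) * X + C (-(a m + 1)) with hP
      have hPd : P.natDegree = 1 := natDegree_linear (pow_ne_zero _ X_ne_zero)
      have hP0 : P ≠ 0 := by rintro h; rw [h] at hPd; simp at hPd
      have hev : evalL Fq P (toL Fq (A m)) = 0 := by
        rw [evalL_eq, ← toL_evalK, evalK, hP]
        simp only [eval₂_add, eval₂_mul, eval₂_C, eval₂_X]
        rw [hA]
        simp only
        rw [mul_div_cancel₀ _ (hXne m), map_neg, add_neg_cancel, map_zero]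
      obtain ⟨M, h1, h2, h3⟩ := exists_min_of_root hv _ P hP0 hev
      refine ⟨M, h1, by omega, h3.trans ?_⟩
      have hqm : 1 ≤ qq Fq ^ m := one_le_pow₀ hq.le
      apply Hpoly_le
      intro i
      match i with
      | 0 =>
        have e : polyToK Fq (P.coeff 0) =
            (polyToK Fq (X ^ m) * ξ - polyToK Fq (a m + 1)) - polyToK Fq (X ^ m) * ξ := by
          simp [hP]
        rw [e, ← absV_toL hv, map_sub]
        refine (na_sub_le (absV_na hv) _ _).trans ?_
        rw [absV_toL, absV_toL, hdist1, kabs_mul hv, hXm]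
        apply max_le <;> nlinarith
      | 1 =>
        have e : P.coeff 1 = X ^ m := by
          rw [hP, coeff_add, coeff_C_mul, coeff_X_one, mul_one, coeff_C_ne_zero one_ne_zero, add_zero]
        rw [e, hXm]; nlinarith
      | (i+2) =>
        have e : P.coeff (i+2) = 0 := coeff_eq_zero_of_natDegree_lt (by omega)
        rw [e, map_zero, kabs_zero]; positivity
    choose M hM1 hM2 hM3 using hex
    obtain ⟨m0, hm0⟩ := pow_unbounded_of_one_lt (Cc ^ (1 / ε)) hq
    refine Set.infinite_of_injective_forall_mem (f := fun m : ℕ => toL Fq (A (m + m0))) ?_ ?_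
    · intro m m' h
      have h1 := hdist (m + m0)
      have h2 := hdist (m' + m0)
      simp only at h
      rw [h, h2, inv_inj] at h1
      have := (pow_right_injective₀ hq0 hq.ne') h1
      omega
    · intro m
      set k := m + m0 with hk
      have hmp := minPolyPrim_eq (hM1 k)
      refine ⟨⟨_, hM1 k⟩, ?_, ?_, ?_⟩
      · rw [degAlg, hmp]; exact (hM2 k).trans hn
      · rw [hdist]; positivity
      · rw [hdist, heightAlg, hmp]
        set H := Hpoly Fq (M k)
        have hH1 : 1 ≤ H := one_le_Hpoly (hM1 k).2.1.ne_zero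
        have hqk : 0 < qq Fq ^ k := by positivity
        have hCk : Cc ≤ (qq Fq ^ k) ^ ε := by
          have h1 : Cc ^ (1 / ε) ≤ qq Fq ^ k :=
            hm0.le.trans (pow_le_pow_right₀ hq.le (by omega))
          have := Real.rpow_le_rpow (by positivity) h1 hε.le
          rwa [← Real.rpow_mul (by positivity), one_div, inv_mul_cancel₀ hε.ne',
            Real.rpow_one] at this
        have hHk : H ≤ (qq Fq ^ k) ^ (1 + ε) := by
          rw [Real.rpow_add hqk, Real.rpow_one, mul_comm]
          exact (hM3 k).trans (by gcongr)
        have h2 : ((qq Fq ^ k) ^ (1 + ε)) ^ (- -ε - 1) ≤ H ^ (- -ε - 1) :=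
          Real.rpow_le_rpow_of_nonpos (by linarith) hHk (by linarith)
        refine le_trans ?_ h2
        rw [← Real.rpow_mul hqk.le, ← Real.rpow_neg_one]
        apply Real.rpow_le_rpow_of_exponent_le (one_le_pow₀ hq.le)
        nlinarith
  by_contra hlt
  push Not at hlt
  obtain ⟨r, hr1, hr2⟩ := EReal.lt_iff_exists_real_btwn.mp hlt
  have hr2' : r < 0 := by exact_mod_cast hr2
  have h1 := key (min (-r) (1/2)) (by apply lt_min <;> linarith)
    ((min_le_right _ _).trans_lt (by norm_num))
  have h2 := h1.trans_lt hr1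
  have h3 : -(min (-r) (1/2)) < r := by exact_mod_cast h2
  have := min_le_left (-r) (1/2)
  linarith

end

section

variable {Fq}

lemma ereal_eps {w : ℝ} {W : EReal} (h : ∀ ε : ℝ, 0 < ε → ((w - ε : ℝ) : EReal) ≤ W) :
    (w : EReal) ≤ W := by
  induction W with
  | bot => exact absurd (le_bot_iff.mp (h 1 one_pos)) (EReal.coe_ne_bot _)
  | top => exact le_top
  | coe s =>
    rw [EReal.coe_le_coe_iff]
    apply le_of_forall_pos_le_add
    intro ε hε
    have := h ε hε
    rw [EReal.coe_le_coe_iff] at this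
    linarith

lemma eval_le_gauss {v : L Fq → ℝ} (hv : IsAbsExt Fq v) (g : Polynomial (L Fq)) (x : L Fq)
    (n : ℕ) (hn : g.natDegree ≤ n) :
    v (g.eval x) ≤ g.gaussNorm (absV hv) 1 * (max 1 (v x)) ^ n := by
  rw [eval_eq_sum_range, ← absV_apply hv]
  have h := IsNonarchimedean.apply_sum_le_sup (absV_na hv) (s := Finset.range (g.natDegree + 1))
    ⟨0, by simp⟩ (l := fun i => g.coeff i * x ^ i)
  refine h.trans ?_
  apply Finset.sup'_le
  intro i hi
  rw [Finset.mem_range] at hi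
  rw [map_mul, map_pow, absV_apply hv x]
  have h1 := g.le_gaussNorm (absV hv) (c := 1) zero_le_one i
  rw [one_pow, mul_one] at h1
  have h2 : v x ^ i ≤ max 1 (v x) ^ n :=
    (pow_le_pow_left₀ (hv.nonneg x) (le_max_right 1 _) i).trans
      (pow_le_pow_right₀ (le_max_left _ _) (by omega))
  exact mul_le_mul h1 h2 (pow_nonneg (hv.nonneg x) _)
    (gaussNorm_nonneg _ _ zero_le_one)

lemma star_le {v : L Fq → ℝ} (hv : IsAbsExt Fq v) (n : ℕ) (ξ : K Fq) :
    wStarExp Fq v n ξ ≤ wExp Fq n ξ := by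
  apply sSup_le
  rintro _ ⟨w, rfl, hinf⟩
  apply ereal_eps
  intro ε hε
  apply le_sSup
  refine ⟨w - ε, rfl, ?_⟩
  set A := {α : L Fq | IsAlgElem Fq α ∧ degAlg Fq α ≤ n ∧ 0 < v (toL Fq ξ - α) ∧
      v (toL Fq ξ - α) ≤ heightAlg Fq α ^ (-w - 1)} with hA
  set Cc := max 1 (kabs Fq ξ) with hCc
  have hC1 : 1 ≤ Cc := le_max_left _ _
  set T := minPolyPrim Fq '' A with hT
  have hTinf : T.Infinite := by
    intro hfin
    apply hinf
    refine (hfin.biUnion (t := fun Q => {α | Q ≠ 0 ∧ evalL Fq Q α = 0}) ?_).subset ?_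
    · intro Q hQ
      by_cases h0 : Q = 0
      · simp [h0]
      · have hne : Q.map (φ Fq) ≠ 0 := by
          rwa [Ne, Polynomial.map_eq_zero_iff (φ_injective Fq)]
        refine (Polynomial.finite_setOf_isRoot hne).subset ?_
        rintro α ⟨_, hα⟩
        rw [evalL_eq] at hα
        exact hα
    · intro α hα
      have hs := minPolyPrim_spec hα.1
      exact Set.mem_biUnion (Set.mem_image_of_mem _ hα) ⟨hs.2.1.ne_zero, hs.2.2.2.2⟩
  have hT' := hTinf.sdiff ((finite_height (Fq := Fq) n ((Cc ^ n) ^ (1 / ε))).union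
    (Set.finite_singleton (minPolyPrim Fq (toL Fq ξ))))
  refine hT'.mono ?_
  rintro Q ⟨⟨α, hα, rfl⟩, hnot⟩
  obtain ⟨halg, hdeg, hpos, hle⟩ := hα
  have hs := minPolyPrim_spec halg
  rw [degAlg] at hdeg
  rw [heightAlg] at hle
  set Q := minPolyPrim Fq α with hQ
  have hH1 : 1 ≤ Hpoly Fq Q := one_le_Hpoly hs.2.1.ne_zero
  have hH0 : 0 < Hpoly Fq Q := by linarith
  have hbig : (Cc ^ n) ^ (1 / ε) ≤ Hpoly Fq Q := by
    by_contra h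
    exact hnot (Or.inl ⟨hdeg, (not_le.mp h).le⟩)
  have hne : evalK Fq Q ξ ≠ 0 := by
    intro h0
    apply hnot
    right
    have : IsMinPolyOf Fq Q (toL Fq ξ) :=
      ⟨hs.1, hs.2.1, hs.2.2.1, hs.2.2.2.1, by rw [evalL_eq, ← toL_evalK, h0, map_zero]⟩
    exact (minPolyPrim_eq this).symm
  refine ⟨hdeg, (kabs_pos hv).mpr hne, ?_⟩
  have hroot : (Q.map (φ Fq)).IsRoot α := by rw [IsRoot, ← evalL_eq]; exact hs.2.2.2.2
  obtain ⟨g, hg⟩ := dvd_iff_isRoot.mpr hroot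
  have hQ0 : Q.map (φ Fq) ≠ 0 := by
    rw [Ne, Polynomial.map_eq_zero_iff (φ_injective Fq)]; exact hs.2.1.ne_zero
  have hg0 : g ≠ 0 := by rintro rfl; exact hQ0 (by rw [hg, mul_zero])
  have hgd : g.natDegree ≤ n := by
    have : (Q.map (φ Fq)).natDegree ≤ n := (natDegree_map_le).trans hdeg
    rw [hg, natDegree_mul (X_sub_C_ne_zero α) hg0] at this
    omega
  have hgH : g.gaussNorm (absV hv) 1 ≤ Hpoly Fq Q := by
    rw [Hpoly_eq_gauss hv, hg, gaussNorm_mul (absV_na hv) one_pos, gaussNorm_X_sub_C]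
    exact le_mul_of_one_le_left (gaussNorm_nonneg _ _ zero_le_one) (le_max_left _ _)
  have hC : Cc ^ n ≤ Hpoly Fq Q ^ ε := by
    have := Real.rpow_le_rpow (by positivity) hbig hε.le
    rwa [← Real.rpow_mul (by positivity), one_div, inv_mul_cancel₀ hε.ne', Real.rpow_one] at this
  rw [← toL_ξ hv, toL_evalK, hg, eval_mul, eval_sub, eval_X, eval_C, hv.map_mul]
  have hge := eval_le_gauss hv g (toL Fq ξ) n hgd
  rw [toL_ξ hv] at hge
  calc v (toL Fq ξ - α) * v (g.eval (toL Fq ξ))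
      ≤ Hpoly Fq Q ^ (-w - 1) * (Hpoly Fq Q * Hpoly Fq Q ^ ε) := by
        refine mul_le_mul hle (hge.trans ?_) (hv.nonneg _) (by positivity)
        exact mul_le_mul hgH hC (by positivity) hH0.le
    _ = Hpoly Fq Q ^ (-(w - ε)) := by
        nth_rewrite 2 [← Real.rpow_one (Hpoly Fq Q)]
        rw [← Real.rpow_add hH0, ← Real.rpow_add hH0]; congr 1; ring

lemma star_mono {v : L Fq → ℝ} (m n : ℕ) (h : m ≤ n) (ξ : K Fq) :
    wStarExp Fq v m ξ ≤ wStarExp Fq v n ξ := by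
  apply sSup_le_sSup
  rintro _ ⟨w, rfl, hinf⟩
  exact ⟨w, rfl, hinf.mono fun α hα => ⟨hα.1, hα.2.1.trans h, hα.2.2⟩⟩

lemma frob {v : L Fq → ℝ} (hv : IsAbsExt Fq v) (x : ℕ → K Fq) (i : ℕ) (hi : i < ringChar Fq) :
    kabs Fq (x i) ^ ringChar Fq ≤
      kabs Fq (∑ i ∈ Finset.range (ringChar Fq), polyToK Fq X ^ i * x i ^ ringChar Fq) := by
  set p := ringChar Fq with hp
  have hp0 : 0 < p := (p_prime (Fq := Fq)).pos
  have hq := one_lt_qq Fq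
  set t : ℕ → K Fq := fun i => polyToK Fq X ^ i * x i ^ p with ht
  have hX : kabs Fq (polyToK Fq X) = qq Fq := by
    rw [kabs_poly Fq X_ne_zero, natDegree_X, pow_one]
  have hta : ∀ i, kabs Fq (t i) = qq Fq ^ i * kabs Fq (x i) ^ p := by
    intro i
    rw [ht]; simp only
    rw [kabs_mul hv, kabs_pow hv, kabs_pow hv, hX]
  have hle : ∀ i, kabs Fq (x i) ^ p ≤ kabs Fq (t i) := by
    intro i
    rw [hta]
    exact le_mul_of_one_le_left (pow_nonneg (kabs_nonneg _) _) (one_le_pow₀ hq.le)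
  obtain ⟨k, hk, hmax⟩ := Finset.exists_max_image (Finset.range p) (fun i => kabs Fq (t i))
    ⟨0, by simpa using hp0⟩
  by_cases hk0 : kabs Fq (t k) = 0
  · refine ((hle i).trans (hmax i (by simpa using hi))).trans ?_
    rw [hk0]; exact kabs_nonneg _
  · have hz : ∀ j, x j ≠ 0 → kabs Fq (t j) = qq Fq ^ ((j : ℤ) - (x j).order * p) := by
      intro j hj
      rw [hta, kabs_of_ne Fq hj, ← zpow_natCast, ← zpow_natCast, ← zpow_mul,
        ← zpow_add₀ (by linarith)]
      congr 1; ring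
    have hxk : x k ≠ 0 := by
      intro h
      apply hk0
      rw [hta, h, kabs_zero, zero_pow hp0.ne', mul_zero]
    have hsum : absV hv (∑ j ∈ Finset.range p, toL Fq (t j)) = absV hv (toL Fq (t k)) := by
      apply IsNonarchimedean.apply_sum_eq_of_lt (absV_na hv) (fun a => ((absV hv).map_neg a).symm) hk
      intro j hj hjk
      rw [absV_toL, absV_toL]
      refine lt_of_le_of_ne (hmax j hj) ?_
      intro heq
      have hxj : x j ≠ 0 := by
        intro h
        apply hk0
        rw [← heq, hta, h, kabs_zero, zero_pow hp0.ne', mul_zero]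
      rw [hz j hxj, hz k hxk] at heq
      have h1 := zpow_right_injective₀ (by linarith) hq.ne' heq
      rw [Finset.mem_range] at hj hk
      apply hjk
      have h2 : ((j : ℤ)) % p = (k : ℤ) % p := by
        have := congrArg (· % (p : ℤ)) h1
        simpa using this
      rw [Int.emod_eq_of_lt (by positivity) (by exact_mod_cast hj),
        Int.emod_eq_of_lt (by positivity) (by exact_mod_cast hk)] at h2
      exact_mod_cast h2
    rw [← map_sum, absV_toL, absV_toL] at hsum
    rw [hsum]
    exact (hle i).trans (hmax i (by simpa using hi))

lemma decomp (c : Polynomial Fq) : ∃ g : ℕ → Polynomial Fq,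
    c = ∑ i ∈ Finset.range (ringChar Fq), X ^ i * g i ^ ringChar Fq := by
  have : Fact (ringChar Fq).Prime := ⟨p_prime⟩
  have : ExpChar (Polynomial Fq) (ringChar Fq) := ExpChar.prime p_prime
  have hp : (ringChar Fq).Prime := p_prime
  induction c using Polynomial.induction_on' with
  | add a b ha hb =>
    obtain ⟨g, hg⟩ := ha
    obtain ⟨h, hh⟩ := hb
    refine ⟨fun i => g i + h i, ?_⟩
    nth_rewrite 1 [hg, hh]
    rw [← Finset.sum_add_distrib]
    refine Finset.sum_congr rfl fun i _ => ?_
    rw [add_pow_expChar, mul_add]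
  | monomial n a =>
    obtain ⟨b, hb⟩ := (surjective_frobenius Fq (ringChar Fq)) a
    rw [frobenius_def] at hb
    refine ⟨fun i => if i = n % ringChar Fq then monomial (n / ringChar Fq) b else 0, ?_⟩
    rw [Finset.sum_eq_single (n % ringChar Fq)]
    · simp only [if_true]
      rw [monomial_pow, hb, X_pow_mul_monomial]
      congr 1
      rw [Nat.div_add_mod' n]
    · intro i _ hi
      simp only [if_neg hi]
      rw [zero_pow hp.ne_zero, mul_zero]
    · intro h
      exact absurd (Finset.mem_range.mpr (Nat.mod_lt _ hp.pos)) h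

end

section

variable {Fq}

lemma lower_bound (ξ : K Fq) : ∀ S : Set (Polynomial (Polynomial Fq)), S.Finite →
    (∀ Q ∈ S, 0 < kabs Fq (evalK Fq Q ξ)) → ∃ c : ℝ, 0 < c ∧ c ≤ 1 ∧
      ∀ Q ∈ S, c ≤ kabs Fq (evalK Fq Q ξ) := by
  intro S hS
  induction S, hS using Set.Finite.induction_on with
  | empty => intro _; exact ⟨1, one_pos, le_rfl, by simp⟩
  | insert _ _ ih =>
    intro h
    obtain ⟨c, h0, h1, h2⟩ := ih (fun Q hQ => h Q (Set.mem_insert_of_mem _ hQ))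
    refine ⟨min c (kabs Fq (evalK Fq _ ξ)), lt_min h0 (h _ (Set.mem_insert _ _)),
      (min_le_left _ _).trans h1, ?_⟩
    rintro Q (rfl | hQ)
    · exact min_le_right _ _
    · exact (min_le_left _ _).trans (h2 Q hQ)

lemma insep_linear {v : L Fq → ℝ} (hv : IsAbsExt Fq v) (n : ℕ) (ξ : K Fq) (w : ℝ) (hw : 0 < w)
    (hn : n < 2 * ringChar Fq) (Q : Polynomial (Polynomial Fq)) (hQ : Q ∈ SS n ξ w)
    (hd : derivative Q = 0) : ∃ P : Polynomial (Polynomial Fq), P.natDegree ≤ 1 ∧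
      0 < kabs Fq (evalK Fq P ξ) ∧ kabs Fq (evalK Fq P ξ) ≤ Hpoly Fq P ^ (-w) ∧
      kabs Fq (evalK Fq P ξ) ^ ringChar Fq ≤ kabs Fq (evalK Fq Q ξ) := by
  have hp : (ringChar Fq).Prime := p_prime
  have : Fact (ringChar Fq).Prime := ⟨hp⟩
  have : ExpChar (K Fq) (ringChar Fq) := by
    have : CharP (K Fq) (ringChar Fq) :=
      charP_of_injective_ringHom (polyToK_injective Fq) (ringChar Fq)
    exact ExpChar.prime hp
  obtain ⟨hQi, hmon, hQd, hQn, hpos, hle⟩ := hQ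
  have hexp := expand_contract (ringChar Fq) hd hp.ne_zero
  set R := contract (ringChar Fq) Q with hR
  have hRd : R.natDegree ≤ 1 := by
    rw [← hexp, natDegree_expand] at hQn
    by_contra h
    have : 2 * ringChar Fq ≤ R.natDegree * ringChar Fq := Nat.mul_le_mul_right _ (by omega)
    omega
  have hRlin := eq_X_add_C_of_natDegree_le_one hRd
  obtain ⟨A, hA⟩ := decomp (R.coeff 1)
  obtain ⟨B, hB⟩ := decomp (R.coeff 0)
  have hev : evalK Fq Q ξ = ∑ i ∈ Finset.range (ringChar Fq),
      polyToK Fq X ^ i * (polyToK Fq (A i) * ξ + polyToK Fq (B i)) ^ ringChar Fq := by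
    have h0 : evalK Fq Q ξ =
        polyToK Fq (R.coeff 1) * ξ ^ ringChar Fq + polyToK Fq (R.coeff 0) := by
      rw [← hexp, hRlin, evalK]
      simp
    rw [h0, hA, hB]
    simp only [map_sum, map_mul, map_pow]
    rw [Finset.sum_mul, ← Finset.sum_add_distrib]
    refine Finset.sum_congr rfl fun i _ => ?_
    rw [add_pow_expChar, mul_pow]; ring
  obtain ⟨i, hi, hne⟩ : ∃ i < ringChar Fq, polyToK Fq (A i) * ξ + polyToK Fq (B i) ≠ 0 := by
    by_contra! h
    apply (kabs_pos hv).mp hpos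
    rw [hev]
    apply Finset.sum_eq_zero
    intro i hi
    rw [h i (Finset.mem_range.mp hi), zero_pow hp.ne_zero, mul_zero]
  have hb1 := frob hv (fun i => polyToK Fq (A i) * ξ + polyToK Fq (B i)) i hi
  rw [← hev] at hb1
  have hHR : Hpoly Fq Q = Hpoly Fq R := by rw [← hexp, Hpoly_expand _ hp.pos]
  have hcA : kabs Fq (polyToK Fq (A i)) ^ ringChar Fq ≤ Hpoly Fq Q := by
    rw [hHR]
    refine le_trans ?_ (coeff_le_Hpoly R 1)
    rw [hA]
    simpa only [map_sum, map_mul, map_pow] using frob hv (fun i => polyToK Fq (A i)) i hi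
  have hcB : kabs Fq (polyToK Fq (B i)) ^ ringChar Fq ≤ Hpoly Fq Q := by
    rw [hHR]
    refine le_trans ?_ (coeff_le_Hpoly R 0)
    rw [hB]
    simpa only [map_sum, map_mul, map_pow] using frob hv (fun i => polyToK Fq (B i)) i hi
  have hH1 : 1 ≤ Hpoly Fq Q := one_le_Hpoly hQi.ne_zero
  have hH0 : 0 < Hpoly Fq Q := by linarith
  set P : Polynomial (Polynomial Fq) := C (A i) * X + C (B i) with hP
  have hPd : P.natDegree ≤ 1 := natDegree_linear_le
  have hPev : evalK Fq P ξ = polyToK Fq (A i) * ξ + polyToK Fq (B i) := by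
    rw [hP, evalK]; simp only [eval₂_add, eval₂_mul, eval₂_C, eval₂_X]
  have hP0 : P ≠ 0 := by
    intro h
    apply hne
    rw [← hPev, h, evalK, eval₂_zero]
  have hPH1 : 1 ≤ Hpoly Fq P := one_le_Hpoly hP0
  have hPH0 : 0 < Hpoly Fq P := by linarith
  have hroot : ∀ z : ℝ, 0 ≤ z → z ^ ringChar Fq ≤ Hpoly Fq Q →
      z ≤ Hpoly Fq Q ^ ((ringChar Fq : ℝ)⁻¹) := by
    intro z hz h
    have := Real.rpow_le_rpow (by positivity) h (by positivity : (0 : ℝ) ≤ (ringChar Fq : ℝ)⁻¹)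
    rwa [Real.pow_rpow_inv_natCast hz hp.ne_zero] at this
  have hPH : Hpoly Fq P ≤ Hpoly Fq Q ^ ((ringChar Fq : ℝ)⁻¹) := by
    apply Hpoly_le
    intro m
    match m with
    | 0 =>
      have e : P.coeff 0 = B i := by simp [hP]
      rw [e]; exact hroot _ (kabs_nonneg _) hcB
    | 1 =>
      have e : P.coeff 1 = A i := by
        rw [hP, coeff_add, coeff_C_mul, coeff_X_one, mul_one, coeff_C_of_ne_zero one_ne_zero,
          add_zero]
      rw [e]; exact hroot _ (kabs_nonneg _) hcA
    | (m+2) =>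
      have e : P.coeff (m+2) = 0 := coeff_eq_zero_of_natDegree_lt (by omega)
      rw [e, map_zero, kabs_zero]; positivity
  refine ⟨P, hPd, by rw [hPev]; exact (kabs_pos hv).mpr hne, ?_, by rw [hPev]; exact hb1⟩
  rw [hPev]
  have h1 : kabs Fq (polyToK Fq (A i) * ξ + polyToK Fq (B i)) ^ ringChar Fq ≤
      (Hpoly Fq P ^ (-w)) ^ ringChar Fq := by
    refine (hb1.trans hle).trans ?_
    have h2 : Hpoly Fq P ^ ringChar Fq ≤ Hpoly Fq Q := by
      have := pow_le_pow_left₀ hPH0.le hPH (ringChar Fq)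
      rwa [Real.rpow_inv_natCast_pow hH0.le hp.ne_zero] at this
    rw [← Real.rpow_mul_natCast hPH0.le, mul_comm, Real.rpow_natCast_mul hPH0.le]
    exact Real.rpow_le_rpow_of_nonpos (by positivity) h2 (by linarith)
  exact (pow_le_pow_iff_left₀ (kabs_nonneg _) (by positivity) hp.ne_zero).mp h1

lemma insep_family {v : L Fq → ℝ} (hv : IsAbsExt Fq v) (n : ℕ) (hn1 : 1 ≤ n) (ξ : K Fq) (w : ℝ)
    (hw : 0 < w) (hn : n < 2 * ringChar Fq) (S : Set (Polynomial (Polynomial Fq)))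
    (hS : S ⊆ SS n ξ w) (hd : ∀ Q ∈ S, derivative Q = 0) (hinf : S.Infinite)
    (ε : ℝ) (hε : 0 < ε) (hεw : ε < w) :
    ((w - 2 * ε : ℝ) : EReal) ≤ wStarExp Fq v n ξ := by
  have hp : (ringChar Fq).Prime := p_prime
  have hPinf : {P : Polynomial (Polynomial Fq) | P.natDegree ≤ 1 ∧ 0 < kabs Fq (evalK Fq P ξ) ∧
      kabs Fq (evalK Fq P ξ) ≤ Hpoly Fq P ^ (-w)}.Infinite := by
    intro hfin
    obtain ⟨c, hc0, hc1, hc⟩ := lower_bound ξ _ hfin (fun Q hQ => hQ.2.1)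
    apply hinf
    refine (finite_height (Fq := Fq) n ((c ^ ringChar Fq) ^ (-w⁻¹))).subset ?_
    intro Q hQ
    obtain ⟨P, h1, h2, h3, h4⟩ := insep_linear hv n ξ w hw hn Q (hS hQ) (hd Q hQ)
    have hcP := hc P ⟨h1, h2, h3⟩
    obtain ⟨hQi, hmon, hQd, hQn, hpos, hle⟩ := hS hQ
    have hH1 : 1 ≤ Hpoly Fq Q := one_le_Hpoly hQi.ne_zero
    have hH0 : 0 < Hpoly Fq Q := by linarith
    refine ⟨hQn, ?_⟩
    have h5 : c ^ ringChar Fq ≤ Hpoly Fq Q ^ (-w) :=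
      ((pow_le_pow_left₀ hc0.le hcP _).trans h4).trans hle
    have h6 := Real.rpow_le_rpow_of_nonpos (by positivity) h5
      (by simpa using hw.le : -w⁻¹ ≤ 0)
    rwa [← Real.rpow_mul hH0.le, neg_mul_neg, mul_inv_cancel₀ hw.ne', Real.rpow_one] at h6
  have hSS := SS_infinite hv 1 ξ w (w - ε) (by linarith) (by linarith) hPinf
  have := star_of_family hv 1 ξ (w - ε) (by linarith) 1 _ subset_rfl hSS ?_ ε hε
  · refine le_trans ?_ (this.trans (star_mono 1 n hn1 ξ))
    rw [EReal.coe_le_coe_iff]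
    push_cast
    linarith
  · intro Q hQ
    obtain ⟨j, R, h1, h2, h3, h4⟩ := exists_insep Q hQ.1 hQ.2.2.1
    refine ⟨j, R, h1, h2, h3, h4, ?_⟩
    have := hQ.2.2.2.1
    rw [h1, natDegree_expand] at this
    exact (Nat.le_mul_of_pos_left _ h3).trans this

lemma ereal_close {w c d : ℝ} {W : EReal} (hc : 0 < c) (hd : 0 ≤ d) (hW : 0 ≤ W)
    (h : 0 < w → ∀ ε : ℝ, 0 < ε → ε < w → ∃ y : ℝ, (y : EReal) ≤ W ∧ w - ε ≤ c * y + d) :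
    (w : EReal) ≤ (c : EReal) * W + (d : EReal) := by
  induction W with
  | bot => simp at hW
  | top => rw [EReal.coe_mul_top_of_pos hc, EReal.top_add_coe]; exact le_top
  | coe s =>
    rw [← EReal.coe_mul, ← EReal.coe_add, EReal.coe_le_coe_iff]
    have hs : 0 ≤ s := by exact_mod_cast hW
    by_cases hw : 0 < w
    · by_contra hlt
      push Not at hlt
      have hcs : 0 ≤ c * s + d := by positivity
      obtain ⟨y, hy, hy2⟩ := h hw ((w - (c * s + d)) / 2) (by linarith) (by linarith)
      rw [EReal.coe_le_coe_iff] at hy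
      have := mul_le_mul_of_nonneg_left hy hc.le
      linarith
    · have : 0 ≤ c * s + d := by positivity
      linarith

lemma main_B {v : L Fq → ℝ} (hv : IsAbsExt Fq v)
    (n : ℕ) (hn : 1 ≤ n) (ξ : K Fq) (k : ℕ)
    (hk1 : (ringChar Fq) ^ k ≤ n) (hk2 : n < (ringChar Fq) ^ (k + 1)) :
    wExp Fq n ξ ≤ (((ringChar Fq : ℝ) ^ k : ℝ) : EReal) * wStarExp Fq v n ξ +
       (((ringChar Fq : ℝ) ^ k * ((n : ℝ) + 1) - 2 : ℝ) : EReal) := by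
  have hp : (ringChar Fq).Prime := p_prime
  have hc1 : (1 : ℝ) ≤ (ringChar Fq : ℝ) ^ k := by
    exact_mod_cast Nat.one_le_pow _ _ hp.pos
  have hnR : (1 : ℝ) ≤ n := by exact_mod_cast hn
  apply sSup_le
  rintro _ ⟨w, rfl, hinf⟩
  apply ereal_close (by linarith) (by nlinarith) (star_nonneg hv n hn ξ)
  intro hw ε hε hεw
  have hSS := SS_infinite hv n ξ w (w - ε / 2) (by linarith) (by linarith) hinf
  have := star_of_family hv n ξ (w - ε / 2) (by linarith) (ringChar Fq ^ k) _ subset_rfl hSS ?_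
    (ε / 2 / (ringChar Fq : ℝ) ^ k) (by positivity)
  · refine ⟨_, this, ?_⟩
    push_cast
    apply le_of_eq
    field_simp
    ring
  · intro Q hQ
    obtain ⟨j, R, h1, h2, h3, h4⟩ := exists_insep Q hQ.1 hQ.2.2.1
    refine ⟨j, R, h1, h2, h3, h4, ?_⟩
    have := hQ.2.2.2.1
    rw [h1, natDegree_expand] at this
    have hj : ringChar Fq ^ j < ringChar Fq ^ (k + 1) :=
      ((Nat.le_mul_of_pos_left _ h3).trans this).trans_lt hk2
    rw [Nat.pow_lt_pow_iff_right hp.one_lt] at hj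
    exact Nat.pow_le_pow_right hp.pos (by omega)

lemma main_C {v : L Fq → ℝ} (hv : IsAbsExt Fq v)
    (n : ℕ) (hn : 1 ≤ n) (ξ : K Fq) (h2p : n < 2 * ringChar Fq) :
    wExp Fq n ξ ≤ wStarExp Fq v n ξ + (((n : ℝ) - 1 : ℝ) : EReal) := by
  have hnR : (1 : ℝ) ≤ n := by exact_mod_cast hn
  apply sSup_le
  rintro _ ⟨w, rfl, hinf⟩
  have key := ereal_close (w := w) (c := 1) (d := (n : ℝ) - 1) one_pos (by linarith)
    (star_nonneg hv n hn ξ) ?_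
  · rwa [EReal.coe_one, one_mul] at key
  intro hw ε hε hεw
  have hSS := SS_infinite hv n ξ w (w - ε / 4) (by linarith) (by linarith) hinf
  set S1 := {Q ∈ SS n ξ (w - ε / 4) | derivative Q ≠ 0} with hS1
  set S2 := {Q ∈ SS n ξ (w - ε / 4) | derivative Q = 0} with hS2
  have hun : SS n ξ (w - ε / 4) = S1 ∪ S2 := by
    ext Q
    constructor
    · intro h
      by_cases h0 : derivative Q = 0
      · exact Or.inr ⟨h, h0⟩
      · exact Or.inl ⟨h, h0⟩
    · rintro (h | h) <;> exact h.1
  rw [hun, Set.infinite_union] at hSS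
  rcases hSS with h1 | h2
  · have := star_of_family hv n ξ (w - ε / 4) (by linarith) 1 S1 (fun Q h => h.1) h1 ?_
      (ε / 4) (by positivity)
    · refine ⟨_, this, ?_⟩
      push_cast
      linarith
    · intro Q hQ
      refine ⟨0, Q, ?_, hQ.1.1, hQ.1.2.2.1, hQ.2, ?_⟩
      · rw [pow_zero, expand_one]
      · rw [pow_zero]
  · have := insep_family hv n hn ξ (w - ε / 4) (by linarith) h2p S2 (fun Q h => h.1)
      (fun Q h => h.2) h2 (ε / 4) (by linarith) (by linarith)
    refine ⟨_, this, ?_⟩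
    linarith

end

theorem stmt17 (Fq : Type) [Field Fq] [Fintype Fq]
    (v : L Fq → ℝ) (hv : IsAbsExt Fq v)
    (n : ℕ) (hn : 1 ≤ n) (ξ : K Fq) (k : ℕ)
    (hk1 : (ringChar Fq) ^ k ≤ n) (hk2 : n < (ringChar Fq) ^ (k + 1)) :
    (wStarExp Fq v n ξ ≤ wExp Fq n ξ ∧
     wExp Fq n ξ ≤ (((ringChar Fq : ℝ) ^ k : ℝ) : EReal) * wStarExp Fq v n ξ +
       (((ringChar Fq : ℝ) ^ k * ((n : ℝ) + 1) - 2 : ℝ) : EReal)) ∧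
    (n < 2 * ringChar Fq →
      wExp Fq n ξ ≤ wStarExp Fq v n ξ + (((n : ℝ) - 1 : ℝ) : EReal)) := by
  exact ⟨⟨star_le hv n ξ, main_B hv n hn ξ k hk1 hk2⟩, main_C hv n hn ξ⟩

end Ooto
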